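/- arXiv:1901.10659 — 5 statements merged into one kernel-verified Lean document; each statement's English description precedes it below -/
import Mathlib

section
/- Let 𝔽 be a field and d ≥ 1 an integer. Let a, b, c, q be nonzero scalars in 𝔽 such that: q^{2i} ≠ 1 for 1 ≤ i ≤ d; neither a² nor b² is among q^{2d−2}, q^{2d−4}, …, q^{2−2d}; and none of abc, a^{−1}bc, ab^{−1}c, abc^{−1} is among q^{d−1}, q^{d−3}, …, q^{1−d}. Define θ_i = aq^{2i−d} + a^{−1}q^{d−2i} and θ*_i = bq^{2i−d} + b^{−1}q^{d−2i} for 0 ≤ i ≤ d; b_0 = (q^{d} − q^{−d})(cq − a^{−1}b^{−1}q^{d})(q^{−1} − abc^{−1}q^{−d})/(bq^{1−d} − b^{−1}q^{d−1}); b_i = (q^{d−i} − q^{i−d})(bq^{i−d} − b^{−1}q^{d−i})(cq^{i+1} − a^{−1}b^{−1}q^{d−i})(q^{−i−1} − abc^{−1}q^{i−d}) / ((bq^{2i−d} − b^{−1}q^{d−2i})(bq^{2i−d+1} − b^{−1}q^{d−2i−1})) for 1 ≤ i ≤ d−1; c_i = (q^{i} − q^{−i})(bq^{i} − b^{−1}q^{−i})(a^{−1}q^{i−d−1}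 − b^{−1}c^{−1}q^{−i})(bq^{i} − acq^{d−i+1}) / ((bq^{2i−d−1} − b^{−1}q^{d−2i+1})(bq^{2i−d} − b^{−1}q^{d−2i})) for 1 ≤ i ≤ d−1; c_d = (q^{d} − q^{−d})(a^{−1}q^{−1} − b^{−1}c^{−1}q^{−d})(bq^{d} − acq)/(bq^{d−1} − b^{−1}q^{1−d}); and a_i = θ_0 − b_i − c_i for 0 ≤ i ≤ d, where b_d = c_0 = 0. Then conditions (i)–(viii) of the second main theorem are satisfied with β = q² + q^{−2}, γ = 0, γ* = 0, θ_{−1} = aq^{−d−2} + a^{−1}q^{d+2}, θ*_{−1} = bq^{−d−2} + b^{−1}q^{d+2}, θ*_{d+1} = bq^{d+2} + b^{−1}q^{−d−2}, and a*_0 = ((b + b^{−1})(aq − a^{−1}q^{−1}) − (c + c^{−1})(q^{d} − q^{−d}))/(aq^{1−d} − a^{−1}q^{d−1}); consequently the (d+1)×(d+1) irreducible tridiagonal matrix A over 𝔽 with diagonal entries a_i, superdiagonal entries b_i, and subdiagonal entries c_i, together with A* = diag(θ*_0,…,θ*_d), form a Leonard pair on 𝔽^{d+1}, with A multiplicity-free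 with eigenvalues θ_0,…,θ_d. -/
namespace LeonardPaper

variable {F : Type*} [Field F] {V : Type*} [AddCommGroup V] [Module F V]

/-- A square matrix is irreducible tridiagonal: entries vanish off the three central
diagonals, and all subdiagonal and superdiagonal entries are nonzero. -/
def IsIrredTridiag {n : ℕ} (M : Matrix (Fin n) (Fin n) F) : Prop :=
  (∀ i j : Fin n, ((i : ℕ) + 1 < (j : ℕ) ∨ (j : ℕ) + 1 < (i : ℕ)) → M i j = 0) ∧
  (∀ i j : Fin n, ((i : ℕ) + 1 = (j : ℕ) ∨ (j : ℕ) + 1 = (i : ℕ)) → M i j ≠ 0)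

/-- Leonard pair on `V` (of dimension `d+1`). -/
def IsLeonardPair (d : ℕ) (A As : Module.End F V) : Prop :=
  (∃ bas : Module.Basis (Fin (d + 1)) F V,
      IsIrredTridiag (LinearMap.toMatrix bas bas A) ∧ (LinearMap.toMatrix bas bas As).IsDiag) ∧
  (∃ bas : Module.Basis (Fin (d + 1)) F V,
      IsIrredTridiag (LinearMap.toMatrix bas bas As) ∧ (LinearMap.toMatrix bas bas A).IsDiag)

/-- A system of mutually orthogonal (rank-one) idempotents in `End(V)`. -/
def MOISys (d : ℕ) (E : Fin (d + 1) → Module.End F V) : Prop :=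
  (∀ i j, E i * E j = if i = j then E i else 0) ∧
  ∀ i, Module.finrank F (LinearMap.range (E i)) = 1

/-- `E` is the system of primitive idempotents of a multiplicity-free `A`,
with eigenvalue ordering `θ`. -/
def IdempSysOf (d : ℕ) (A : Module.End F V) (θ : Fin (d + 1) → F)
    (E : Fin (d + 1) → Module.End F V) : Prop :=
  MOISys d E ∧ (∑ i, E i) = 1 ∧ Function.Injective θ ∧ ∀ i, A * E i = θ i • E i

/-- Leonard system. -/
def IsLeonardSystem (d : ℕ) (A : Module.End F V) (E : Fin (d + 1) → Module.End F V)
    (As : Module.End F V) (Es : Fin (d + 1) → Module.End F V) : Prop :=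
  (∃ θ, IdempSysOf d A θ E) ∧ (∃ θs, IdempSysOf d As θs Es) ∧
  (∀ i j : Fin (d + 1), ((i : ℕ) + 1 < (j : ℕ) ∨ (j : ℕ) + 1 < (i : ℕ)) → Es i * A * Es j = 0) ∧
  (∀ i j : Fin (d + 1), ((i : ℕ) + 1 = (j : ℕ) ∨ (j : ℕ) + 1 = (i : ℕ)) → Es i * A * Es j ≠ 0) ∧
  (∀ i j : Fin (d + 1), ((i : ℕ) + 1 < (j : ℕ) ∨ (j : ℕ) + 1 < (i : ℕ)) → E i * As * E j = 0) ∧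
  (∀ i j : Fin (d + 1), ((i : ℕ) + 1 = (j : ℕ) ∨ (j : ℕ) + 1 = (i : ℕ)) → E i * As * E j ≠ 0)

/-- The tridiagonal matrix with diagonal `a`, superdiagonal `b`, subdiagonal `c`. -/
def triMat (d : ℕ) (a b c : ℕ → F) : Matrix (Fin (d + 1)) (Fin (d + 1)) F :=
  Matrix.of fun i j : Fin (d + 1) =>
    if (i : ℕ) = (j : ℕ) then a i
    else if (i : ℕ) + 1 = (j : ℕ) then b i
    else if (j : ℕ) + 1 = (i : ℕ) then c i
    else 0


/-- Conditions (i)–(viii) of the second main theorem (Theorem 4.1 of the paper).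
Here `θ` is the (extended) eigenvalue sequence (indices `-1, 0, …, d`), `θs` the
(extended) dual eigenvalue sequence (indices `-1, 0, …, d+1`), `a`, `b`, `c` the
candidate intersection numbers, and `Ω` the common value in condition (vii). -/
def Thm2Conds (d : ℕ) (θ θs : ℤ → F) (a b c : ℕ → F) (β γ γs astar0 Ω : F) : Prop :=
  -- (i)
  (∀ i j : ℤ, 0 ≤ i → i ≤ d → 0 ≤ j → j ≤ d → i ≠ j → θ i ≠ θ j) ∧
  -- (ii)
  (∀ i : ℤ, 1 ≤ i → i ≤ d → θs i ≠ θs 0) ∧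
  -- (iii), extended to i = 0 and i = d via θs (-1) and θs (d+1)
  (∀ i : ℤ, 0 ≤ i → i ≤ d → γs = θs (i - 1) - β * θs i + θs (i + 1)) ∧
  -- (iv)
  (∀ i : ℕ, 1 ≤ i → i ≤ d → b (i - 1) * c i ≠ 0) ∧
  -- (v)
  (b d = 0) ∧ (c 0 = 0) ∧
  (∀ i : ℕ, i ≤ d → c i + a i + b i = θ 0) ∧
  -- (vi)
  (∀ i : ℕ, i ≤ d →
    c i * (θs ((i : ℤ) - 1) - θs i) - b i * (θs i - θs ((i : ℤ) + 1))
      = (θ 1 - θ 0) * (θs i - astar0)) ∧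
  -- (vii)
  (∀ i : ℕ, 1 ≤ i → i ≤ d →
    c i * (θs ((i : ℤ) - 1) - θs ((i : ℤ) + 1)) - b (i - 1) * (θs ((i : ℤ) - 2) - θs i)
      - (θ 0 - θ (-1)) * (θs ((i : ℤ) - 1) + θs i) = Ω) ∧
  -- (viii)
  (γ = θ (-1) - β * θ 0 + θ 1) ∧
  (∀ i : ℤ, 1 ≤ i → i ≤ (d : ℤ) - 1 → θ (i - 1) - β * θ i + θ (i + 1) = γ)

/-!
Condition (v) says `A 1 = θ₀ 1`, and (vi), (vii) turn into formulas for `A t` and `A t²`, where `t`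
is the vector of dual eigenvalues. As `A` is tridiagonal, these three row sums are all that is
needed to verify the Askey–Wilson relation that is quadratic in `A* = diag t`. That relation makes
`A` triangular with diagonal `θ₀, …, θ_d` along the Krylov flag of `A*` and `1`, so that `A` has an
eigenbasis in which `A*` is upper Hessenberg with subdiagonal `1`. Since `A` and `A*` are
self-adjoint for a common diagonal form, this Hessenberg matrix is irreducible tridiagonal.

For the `q`-Racah parameters, the brackets `[x] = x - x⁻¹` and `⟨x⟩ = x + x⁻¹` factor all
eigenvalue differences, and (vi) and (vii) become two instances of one Laurent polynomial identity.
-/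

section Krylov

variable {R M : Type*} [CommRing R] [AddCommGroup M] [Module R M] {A T : Module.End R M} {w : M}

/-- The Krylov submodule spanned by `w, T w, …, T ^ (n - 1) w`; its dimension may be less
than `n`. -/
def krylov (T : Module.End R M) (w : M) (n : ℕ) : Submodule R M :=
  Submodule.span R ((fun k : ℕ => (T ^ k) w) '' Set.Iio n)

theorem krylov_mono (T : Module.End R M) (w : M) : Monotone (krylov T w) := fun _ _ h =>
  Submodule.span_mono (Set.image_mono (Set.Iio_subset_Iio h))

theorem krylov_zero (T : Module.End R M) (w : M) : krylov T w 0 = ⊥ := by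
  simp [krylov]

theorem pow_apply_mem_krylov (T : Module.End R M) (w : M) {k n : ℕ} (h : k < n) :
    (T ^ k) w ∈ krylov T w n :=
  Submodule.subset_span ⟨k, h, rfl⟩

theorem krylov_succ (T : Module.End R M) (w : M) (n : ℕ) :
    krylov T w (n + 1) = Submodule.span R {(T ^ n) w} ⊔ krylov T w n := by
  have hIio : Set.Iio (n + 1) = insert n (Set.Iio n) := by ext; simp
  rw [krylov, hIio, Set.image_insert_eq, Submodule.span_insert, krylov]

theorem apply_mem_krylov_succ {n : ℕ} {u : M} (hu : u ∈ krylov T w n) :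
    T u ∈ krylov T w (n + 1) := by
  refine Submodule.span_le (p := (krylov T w (n + 1)).comap T).2 ?_ hu
  rintro _ ⟨k, hk, rfl⟩
  have hmem := pow_apply_mem_krylov T w (Nat.succ_lt_succ hk)
  rwa [pow_succ', Module.End.mul_apply] at hmem

theorem apply_mem_krylov {n : ℕ} (hn : (T ^ n) w ∈ krylov T w n) {u : M}
    (hu : u ∈ krylov T w n) : T u ∈ krylov T w n := by
  have hle : krylov T w (n + 1) ≤ krylov T w n := by
    rw [krylov_succ]
    exact sup_le ((Submodule.span_singleton_le_iff_mem _ _).2 hn) le_rfl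
  exact hle (apply_mem_krylov_succ hu)

theorem finrank_krylov_le {F V : Type*} [Field F] [AddCommGroup V] [Module F V]
    (T : Module.End F V) (w : V) (n : ℕ) : Module.finrank F (krylov T w n) ≤ n := by
  classical
  have h := finrank_span_finset_le_card (R := F) ((Finset.range n).image fun k => (T ^ k) w)
  rw [Finset.coe_image, Finset.coe_range] at h
  exact h.trans (Finset.card_image_le.trans_eq (Finset.card_range n))

/-- `A` is triangular along the Krylov flag of `T` and `w`, up to index `d`, with diagonal
entries `θ 0, …, θ d`. -/
def KrylovTriangular (A T : Module.End R M) (w : M) (d : ℕ) (θ : ℕ → R) : Prop :=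
  ∀ n ≤ d, A ((T ^ n) w) - θ n • (T ^ n) w ∈ krylov T w n

/-- One of the two Askey–Wilson relations, namely the one quadratic in `T`. -/
def AskeyWilsonRelation (A T : Module.End R M) (β γ γs ρ ω η : R) : Prop :=
  A * T ^ 2 - β • (T * A * T) + T ^ 2 * A - γs • (T * A + A * T) - ρ • A =
    γ • T ^ 2 + ω • T + η • 1

theorem AskeyWilsonRelation.apply_apply_apply {β γ γs ρ ω η : R}
    (h : AskeyWilsonRelation A T β γ γs ρ ω η) {x u₀ u₁ : M} {μ₀ μ₁ : R}
    (hx : A x = μ₀ • x + u₀) (hTx : A (T x) = μ₁ • T x + u₁) :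
    A (T (T x)) - (β * μ₁ - μ₀ + γ) • T (T x) =
      β • T u₁ - T (T u₀) + γs • ((μ₀ + μ₁) • T x + T u₀ + u₁) + ρ • (μ₀ • x + u₀) + ω • T x +
        η • x := by
  have hrel := LinearMap.congr_fun h x
  simp only [pow_two, LinearMap.add_apply, LinearMap.sub_apply, LinearMap.smul_apply,
    Module.End.mul_apply, Module.End.one_apply, hx, hTx, map_add, map_smul] at hrel
  linear_combination (norm := module) hrel

theorem AskeyWilsonRelation.krylovTriangular {β γ γs ρ ω η : R} {d : ℕ} {θ : ℕ → R}
    (h : AskeyWilsonRelation A T β γ γs ρ ω η)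
    (hθ : ∀ n, n + 2 ≤ d → θ (n + 2) = β * θ (n + 1) - θ n + γ)
    (h0 : A w = θ 0 • w) (h1 : A (T w) - θ 1 • T w ∈ krylov T w 1) :
    KrylovTriangular A T w d θ := by
  intro n hn
  induction n using Nat.twoStepInduction with
  | zero => simp [h0]
  | one => simpa only [pow_one] using h1
  | more n ih₀ ih₁ =>
    have hu₀ := ih₀ (by omega)
    have hu₁ := ih₁ (by omega)
    have hx : (T ^ n) w ∈ krylov T w (n + 1) := pow_apply_mem_krylov T w n.lt_succ_self
    rw [pow_succ' T (n + 1), Module.End.mul_apply, hθ n hn]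
    rw [pow_succ' T n, Module.End.mul_apply] at hu₁ ⊢
    rw [h.apply_apply_apply (add_sub_cancel _ _).symm (add_sub_cancel _ _).symm]
    have hTx := apply_mem_krylov_succ hx
    have hTu₀ := apply_mem_krylov_succ hu₀
    have hle : krylov T w (n + 1) ≤ krylov T w (n + 2) := krylov_mono T w (n + 1).le_succ
    have hle' : krylov T w n ≤ krylov T w (n + 2) := krylov_mono T w (by omega)
    refine add_mem (add_mem (add_mem (add_mem (sub_mem ?_ ?_) ?_) ?_) ?_) ?_
    · exact Submodule.smul_mem _ _ (apply_mem_krylov_succ hu₁)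
    · exact apply_mem_krylov_succ hTu₀
    · exact Submodule.smul_mem _ _
        (add_mem (add_mem (Submodule.smul_mem _ _ hTx) (hle hTu₀)) (hle hu₁))
    · exact Submodule.smul_mem _ _ (add_mem (Submodule.smul_mem _ _ (hle hx)) (hle' hu₀))
    · exact Submodule.smul_mem _ _ hTx
    · exact Submodule.smul_mem _ _ (hle hx)

theorem KrylovTriangular.apply_mem_krylov {d : ℕ} {θ : ℕ → R} (h : KrylovTriangular A T w d θ)
    {n : ℕ} (hn : n ≤ d + 1) {u : M} (hu : u ∈ krylov T w n) : A u ∈ krylov T w n := by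
  refine Submodule.span_le (p := (krylov T w n).comap A).2 ?_ hu
  rintro _ ⟨k, hk, rfl⟩
  have hk : k < n := hk
  have hmem := add_mem (krylov_mono T w hk.le (h k (by omega)))
    (Submodule.smul_mem _ (θ k) (pow_apply_mem_krylov T w hk))
  rwa [sub_add_cancel] at hmem

end Krylov

section Eigenbasis

variable {A T : Module.End F V} {w : V} {d : ℕ} {θ : ℕ → F}

theorem KrylovTriangular.exists_apply_sub_smul_eq (h : KrylovTriangular A T w d θ) {μ : F} {n : ℕ}
    (hn : n ≤ d + 1) (hμ : ∀ k < n, θ k ≠ μ) {u : V} (hu : u ∈ krylov T w n) :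
    ∃ v ∈ krylov T w n, A v - μ • v = u := by
  induction n generalizing u with
  | zero => exact ⟨0, zero_mem _, by simpa [krylov_zero, eq_comm] using hu⟩
  | succ n ih =>
    rw [krylov_succ, Submodule.mem_sup] at hu
    obtain ⟨_, hs, u₀, hu₀, rfl⟩ := hu
    obtain ⟨s, rfl⟩ := Submodule.mem_span_singleton.1 hs
    have hne : θ n - μ ≠ 0 := sub_ne_zero.2 (hμ n n.lt_succ_self)
    set x := (T ^ n) w
    obtain ⟨v, hv, hAv⟩ := ih (by omega) (fun k hk => hμ k (by omega))
      (sub_mem hu₀ (Submodule.smul_mem _ (s / (θ n - μ)) (h n (by omega))))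
    refine ⟨(s / (θ n - μ)) • x + v, add_mem
      (Submodule.smul_mem _ _ (pow_apply_mem_krylov T w n.lt_succ_self))
      (krylov_mono T w n.le_succ hv), ?_⟩
    have hs : s / (θ n - μ) * (θ n - μ) = s := div_mul_cancel₀ s hne
    rw [map_add, map_smul]
    linear_combination (norm := module) hAv + hs • x

theorem KrylovTriangular.exists_eigenvector (h : KrylovTriangular A T w d θ) {n : ℕ} (hn : n ≤ d)
    (hθ : ∀ k < n, θ k ≠ θ n) : ∃ v, A v = θ n • v ∧ v - (T ^ n) w ∈ krylov T w n := by
  obtain ⟨u, hu, hAu⟩ := h.exists_apply_sub_smul_eq (by omega) hθ (h n hn)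
  refine ⟨(T ^ n) w - u, ?_, by simpa using hu⟩
  rw [map_sub]
  linear_combination (norm := module) -hAu

theorem KrylovTriangular.pow_apply_notMem_krylov [FiniteDimensional F V]
    (h : KrylovTriangular A T w d θ) (hV : Module.finrank F V = d + 1)
    (hirr : ∀ S : Submodule F V, S ≤ S.comap A → S ≤ S.comap T → w ∈ S → S = ⊤)
    {n : ℕ} (hn : n ≤ d) : (T ^ n) w ∉ krylov T w n := by
  intro hmem
  have hw : w ∈ krylov T w n := by
    rcases n.eq_zero_or_pos with rfl | hpos
    · simpa using hmem
    · simpa using pow_apply_mem_krylov T w hpos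
  have htop := hirr (krylov T w n) (fun _ => h.apply_mem_krylov (by omega))
    (fun _ => LeonardPaper.apply_mem_krylov hmem) hw
  have hle := finrank_krylov_le T w n
  rw [htop, finrank_top, hV] at hle
  omega

theorem KrylovTriangular.exists_eigenbasis [FiniteDimensional F V]
    (h : KrylovTriangular A T w d θ) (hV : Module.finrank F V = d + 1)
    (hirr : ∀ S : Submodule F V, S ≤ S.comap A → S ≤ S.comap T → w ∈ S → S = ⊤)
    (hθ : Function.Injective fun i : Fin (d + 1) => θ i) :
    ∃ bas : Module.Basis (Fin (d + 1)) F V,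
      (∀ i, A (bas i) = θ i • bas i) ∧
        ∀ i : Fin (d + 1), bas i - (T ^ (i : ℕ)) w ∈ krylov T w i := by
  have hev : ∀ n : Fin (d + 1), ∃ v, A v = θ n • v ∧ v - (T ^ (n : ℕ)) w ∈ krylov T w n :=
    fun n => h.exists_eigenvector (by omega) fun k hk hkn =>
      hk.ne (congrArg Fin.val (hθ (a₁ := ⟨k, by omega⟩) (a₂ := n) hkn))
  choose v hAv hv using hev
  have hv0 : ∀ n, v n ≠ 0 := fun n hn =>
    h.pow_apply_notMem_krylov hV hirr (n := n) (by omega) (by simpa [hn] using hv n)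
  have hli : LinearIndependent F v := Module.End.eigenvectors_linearIndependent' A _ hθ v
    fun i => ⟨Module.End.mem_eigenspace_iff.2 (hAv i), hv0 i⟩
  refine ⟨basisOfLinearIndependentOfCardEqFinrank hli (by simp [hV]), ?_, ?_⟩ <;>
    simpa using by assumption

theorem repr_eq_zero_of_mem_krylov {bas : Module.Basis (Fin (d + 1)) F V}
    (hbas : ∀ i : Fin (d + 1), bas i - (T ^ (i : ℕ)) w ∈ krylov T w i) {n : ℕ} {u : V}
    (hu : u ∈ krylov T w n) {i : Fin (d + 1)} (hi : n ≤ i) : bas.repr u i = 0 := by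
  induction n generalizing u with
  | zero => simp_all [krylov_zero]
  | succ n ih =>
    rw [krylov_succ, Submodule.mem_sup] at hu
    obtain ⟨_, hs, u₀, hu₀, rfl⟩ := hu
    obtain ⟨s, rfl⟩ := Submodule.mem_span_singleton.1 hs
    let j : Fin (d + 1) := ⟨n, by omega⟩
    have hji : j ≠ i := Fin.ne_of_val_ne (by simp only [j]; omega)
    have hpow : bas.repr ((T ^ n) w) i = 0 := by
      have := ih (hbas j) (by omega)
      simpa [hji, j] using this
    simp [hpow, ih hu₀ (by omega)]

theorem toMatrix_eq_zero_of_krylov {bas : Module.Basis (Fin (d + 1)) F V}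
    (hbas : ∀ i : Fin (d + 1), bas i - (T ^ (i : ℕ)) w ∈ krylov T w i) {i j : Fin (d + 1)}
    (hij : (j : ℕ) + 1 < i) : LinearMap.toMatrix bas bas T i j = 0 := by
  have hmem : bas j ∈ krylov T w (j + 1) := by
    have := add_mem (krylov_mono T w (Nat.le_succ j) (hbas j))
      (pow_apply_mem_krylov T w (Nat.lt_succ_self j))
    rwa [sub_add_cancel] at this
  rw [LinearMap.toMatrix_apply]
  exact repr_eq_zero_of_mem_krylov hbas (apply_mem_krylov_succ hmem) hij

theorem toMatrix_eq_one_of_krylov {bas : Module.Basis (Fin (d + 1)) F V}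
    (hbas : ∀ i : Fin (d + 1), bas i - (T ^ (i : ℕ)) w ∈ krylov T w i) {i j : Fin (d + 1)}
    (hij : (j : ℕ) + 1 = i) : LinearMap.toMatrix bas bas T i j = 1 := by
  have hmem : T (bas j) - bas i ∈ krylov T w i := by
    have := sub_mem (apply_mem_krylov_succ (hbas j)) (hij ▸ hbas i)
    rwa [map_sub, ← Module.End.mul_apply, ← pow_succ', sub_sub_sub_cancel_right, hij] at this
  have := repr_eq_zero_of_mem_krylov hbas hmem le_rfl
  rw [LinearMap.toMatrix_apply]
  simpa [sub_eq_zero] using this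

end Eigenbasis

section SelfAdjoint

variable {ι : Type*} {B : LinearMap.BilinForm F V} {A T : Module.End F V} {θ : ι → F}
  {bas : Module.Basis ι F V}

theorem iIsOrtho_of_eigenbasis (hA : B.IsAdjointPair B A A) (hθ : Function.Injective θ)
    (hbas : ∀ i, A (bas i) = θ i • bas i) : B.iIsOrtho bas := by
  intro i j hij
  have h := hA (bas i) (bas j)
  rw [hbas, hbas, map_smul, map_smul, LinearMap.smul_apply, smul_eq_mul, smul_eq_mul] at h
  have hne : θ i - θ j ≠ 0 := sub_ne_zero.2 (hθ.ne hij)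
  exact (mul_eq_zero.1 (by linear_combination h : (θ i - θ j) * B (bas i) (bas j) = 0)).resolve_left
    hne

theorem toMatrix_mul_self_eq_of_iIsOrtho [Fintype ι] [DecidableEq ι] (hB : B.iIsOrtho bas)
    (hT : B.IsAdjointPair B T T) (i j : ι) :
    LinearMap.toMatrix bas bas T i j * B (bas i) (bas i) =
      LinearMap.toMatrix bas bas T j i * B (bas j) (bas j) := by
  have hij := hT (bas j) (bas i)
  have expand : ∀ k, T (bas k) = ∑ l, LinearMap.toMatrix bas bas T l k • bas l := fun k => by
    simp only [LinearMap.toMatrix_apply, bas.sum_repr]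
  rw [expand j, expand i, map_sum, map_sum, LinearMap.sum_apply, Finset.sum_eq_single i,
    Finset.sum_eq_single j] at hij
  · simpa using hij
  · intro k _ hk
    rw [map_smul, hB hk.symm, smul_zero]
  · simp
  · intro k _ hk
    rw [map_smul, LinearMap.smul_apply, hB hk, smul_zero]
  · simp

theorem isIrredTridiag_of_mul_eq_mul {n : ℕ} {H : Matrix (Fin n) (Fin n) F} {κ : Fin n → F}
    (hκ : ∀ i, κ i ≠ 0) (hsymm : ∀ i j, H i j * κ i = H j i * κ j)
    (hzero : ∀ i j : Fin n, (j : ℕ) + 1 < i → H i j = 0)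
    (hsub : ∀ i j : Fin n, (j : ℕ) + 1 = i → H i j ≠ 0) : IsIrredTridiag H := by
  have hiff : ∀ i j, H i j = 0 ↔ H j i = 0 := fun i j => by
    have h := hsymm i j
    constructor <;> intro h0 <;> simpa [h0, hκ] using h
  refine ⟨fun i j hij => ?_, fun i j hij => ?_⟩
  · rcases hij with hij | hij
    · exact (hiff i j).2 (hzero j i hij)
    · exact hzero i j hij
  · rcases hij with hij | hij
    · exact (hiff i j).not.2 (hsub j i hij)
    · exact hsub i j hij

theorem isIrredTridiag_toMatrix_of_krylov {d : ℕ} {w : V} {θ : Fin (d + 1) → F}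
    {bas : Module.Basis (Fin (d + 1)) F V} (hB : B.Nondegenerate)
    (hA : B.IsAdjointPair B A A) (hT : B.IsAdjointPair B T T) (hθ : Function.Injective θ)
    (hAbas : ∀ i, A (bas i) = θ i • bas i)
    (hbas : ∀ i : Fin (d + 1), bas i - (T ^ (i : ℕ)) w ∈ krylov T w i) :
    IsIrredTridiag (LinearMap.toMatrix bas bas T) := by
  have horth := iIsOrtho_of_eigenbasis hA hθ hAbas
  have hself := horth.not_isOrtho_basis_self_of_nondegenerate hB
  refine isIrredTridiag_of_mul_eq_mul (κ := fun i => B (bas i) (bas i)) (fun i => hself i)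
    (toMatrix_mul_self_eq_of_iIsOrtho horth hT) (fun _ _ => toMatrix_eq_zero_of_krylov hbas)
    fun _ _ hij => ?_
  rw [toMatrix_eq_one_of_krylov hbas hij]
  exact one_ne_zero

theorem isDiag_toMatrix_of_eigenbasis [Fintype ι] [DecidableEq ι]
    (hbas : ∀ i, A (bas i) = θ i • bas i) : (LinearMap.toMatrix bas bas A).IsDiag := by
  intro i j hij
  simp [LinearMap.toMatrix_apply, hbas, hij.symm]

theorem exists_idempSysOf_of_eigenbasis {d : ℕ} {θ : Fin (d + 1) → F}
    {bas : Module.Basis (Fin (d + 1)) F V} (hθ : Function.Injective θ)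
    (hbas : ∀ i, A (bas i) = θ i • bas i) : ∃ E, IdempSysOf d A θ E := by
  refine ⟨fun i => (bas.coord i).smulRight (bas i), ⟨fun i j => ?_, fun i => ?_⟩, ?_, hθ, ?_⟩
  · ext x
    by_cases hij : i = j
    · subst hij; simp
    · simp [hij]
  · rw [LinearMap.range_smulRight_apply (by simpa [LinearMap.ext_iff] using ⟨bas i, by simp⟩),
      finrank_span_singleton (bas.ne_zero i)]
  · ext x
    simp [LinearMap.sum_apply, bas.sum_repr]
  · intro i
    ext x
    simp only [Module.End.mul_apply, LinearMap.smul_apply, LinearMap.smulRight_apply, map_smul,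
      hbas]
    rw [smul_comm]

end SelfAdjoint

section IrreducibleTridiagonal

open Matrix

variable {d : ℕ} {M : Matrix (Fin (d + 1)) (Fin (d + 1)) F} {t : Fin (d + 1) → F}

theorem IsIrredTridiag.exists_symmetrizer (hM : IsIrredTridiag M) :
    ∃ κ : Fin (d + 1) → F, (∀ i, κ i ≠ 0) ∧ ∀ i j, κ i * M i j = κ j * M j i := by
  set κ := Fin.partialProd fun k : Fin d => M k.castSucc k.succ / M k.succ k.castSucc with hκ
  have hsub : ∀ k : Fin d, M k.succ k.castSucc ≠ 0 := fun k => hM.2 _ _ (Or.inr rfl)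
  have hsuper : ∀ k : Fin d, M k.castSucc k.succ ≠ 0 := fun k => hM.2 _ _ (Or.inl rfl)
  refine ⟨κ, fun i => ?_, fun i j => ?_⟩
  · induction i using Fin.induction with
    | zero => simp [hκ]
    | succ k ih =>
      rw [hκ, Fin.partialProd_succ]
      exact mul_ne_zero ih (div_ne_zero (hsuper k) (hsub k))
  · wlog hij : i < j generalizing i j
    · rcases (not_lt.1 hij).eq_or_lt with rfl | hji
      · rfl
      · exact (this j i hji).symm
    obtain hnext | hfar : (i : ℕ) + 1 = j ∨ (i : ℕ) + 1 < j := by omega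
    · obtain ⟨k, rfl, rfl⟩ : ∃ k : Fin d, i = k.castSucc ∧ j = k.succ :=
        ⟨⟨i, by omega⟩, rfl, Fin.ext hnext.symm⟩
      rw [hκ, Fin.partialProd_succ, mul_assoc, div_mul_cancel₀ _ (hsub k)]
    · rw [hM.1 i j (Or.inl hfar), hM.1 j i (Or.inr hfar), mul_zero, mul_zero]

theorem single_mem_of_diagonal_invariant {n : Type*} [Fintype n] [DecidableEq n] {t : n → F}
    {k : n} (ht : ∀ i, i ≠ k → t i ≠ t k) {S : Submodule F (n → F)}
    (hD : S ≤ S.comap (toLin' (diagonal t))) (h1 : 1 ∈ S) :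
    Pi.single k 1 ∈ S := by
  have hprod : ∀ s : Finset n, (fun j => ∏ i ∈ s, (t j - t i)) ∈ S := by
    intro s
    induction s using Finset.induction_on with
    | empty =>
      simp only [Finset.prod_empty]
      exact h1
    | insert l s hl ih =>
      convert! S.sub_mem (hD ih) (S.smul_mem (t l) ih) using 1
      ext j
      simp [Finset.prod_insert hl, mulVec_diagonal, sub_mul]
  have hc : ∏ i ∈ Finset.univ.erase k, (t k - t i) ≠ 0 :=
    Finset.prod_ne_zero_iff.2 fun i hi => sub_ne_zero.2 (ht i (Finset.ne_of_mem_erase hi)).symm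
  convert! S.smul_mem (∏ i ∈ Finset.univ.erase k, (t k - t i))⁻¹ (hprod (Finset.univ.erase k))
    using 1
  ext j
  rcases eq_or_ne j k with rfl | hj
  · simp [inv_mul_cancel₀ hc]
  · have : ∏ i ∈ Finset.univ.erase k, (t j - t i) = 0 :=
      Finset.prod_eq_zero (Finset.mem_erase.2 ⟨hj, Finset.mem_univ j⟩) (sub_self _)
    simp [hj, this]

theorem IsIrredTridiag.single_mem_of_invariant (hM : IsIrredTridiag M)
    {S : Submodule F (Fin (d + 1) → F)} (hS : S ≤ S.comap (toLin' M)) (h0 : Pi.single 0 1 ∈ S)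
    (j : Fin (d + 1)) : Pi.single j 1 ∈ S := by
  induction j using WellFoundedLT.induction with
  | _ j ih =>
    obtain rfl | ⟨k, rfl⟩ := j.eq_zero_or_eq_succ
    · exact h0
    have hcol : M.col k.castSucc ∈ S := by
      simpa using hS (ih k.castSucc k.castSucc_lt_succ)
    have hsum : M.col k.castSucc = M k.succ k.castSucc • Pi.single k.succ 1 +
        ∑ i ∈ Finset.univ.erase k.succ, M i k.castSucc • Pi.single i 1 := by
      rw [Finset.add_sum_erase _ (fun i => M i k.castSucc • (Pi.single i 1 : Fin (d + 1) → F))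
        (Finset.mem_univ k.succ)]
      exact pi_eq_sum_univ' _
    have hrest : ∑ i ∈ Finset.univ.erase k.succ, M i k.castSucc • Pi.single i 1 ∈ S := by
      refine S.sum_mem fun i hi => ?_
      rcases lt_or_gt_of_ne (Finset.ne_of_mem_erase hi) with hlt | hgt
      · exact S.smul_mem _ (ih i hlt)
      · rw [hM.1 i k.castSucc (Or.inr hgt), zero_smul]
        exact S.zero_mem
    rw [hsum, S.add_mem_iff_left hrest, S.smul_mem_iff (hM.2 _ _ (Or.inr rfl))] at hcol
    exact hcol

theorem IsIrredTridiag.eq_top_of_invariant (hM : IsIrredTridiag M)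
    (ht : ∀ i, i ≠ 0 → t i ≠ t 0) {S : Submodule F (Fin (d + 1) → F)}
    (hMS : S ≤ S.comap (toLin' M)) (hDS : S ≤ S.comap (toLin' (diagonal t))) (h1 : 1 ∈ S) :
    S = ⊤ := by
  have hsingle := hM.single_mem_of_invariant hMS (single_mem_of_diagonal_invariant ht hDS h1)
  refine eq_top_iff.2 fun x _ => ?_
  rw [pi_eq_sum_univ' x]
  exact S.sum_mem fun i _ => S.smul_mem _ (hsingle i)

theorem askeyWilsonRelation_toLin'_iff {R n : Type*} [CommRing R] [Fintype n] [DecidableEq n]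
    {M : Matrix n n R} {t : n → R} {β γ γs ρ ω η : R} :
    AskeyWilsonRelation (toLin' M) (toLin' (diagonal t)) β γ γs ρ ω η ↔
      ∀ i j, M i j * (t j ^ 2 - β * t i * t j + t i ^ 2 - γs * (t i + t j) - ρ) =
        if i = j then γ * t i ^ 2 + ω * t i + η else 0 := by
  have hmatrix : AskeyWilsonRelation (toLin' M) (toLin' (diagonal t)) β γ γs ρ ω η ↔
      M * diagonal t ^ 2 - β • (diagonal t * M * diagonal t) + diagonal t ^ 2 * M -
          γs • (diagonal t * M + M * diagonal t) - ρ • M =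
        γ • diagonal t ^ 2 + ω • diagonal t + η • 1 := by
    rw [← (toLinAlgEquiv' (R := R) (n := n)).injective.eq_iff]
    simp only [map_add, map_sub, map_smul, map_mul, map_pow, map_one]
    rfl
  rw [hmatrix, ← Matrix.ext_iff]
  refine forall₂_congr fun i j => ?_
  simp only [sq, diagonal_mul_diagonal, Matrix.add_apply, Matrix.sub_apply, Matrix.smul_apply,
    mul_diagonal, diagonal_mul, smul_eq_mul, Matrix.one_apply, diagonal_apply]
  rw [iff_iff_eq]
  split_ifs <;> congr 1 <;> ring

-- The off-diagonal entries of the relation vanish by `hρ`, and the diagonal ones are then its row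
-- sums, which only involve `M *ᵥ 1`, `M *ᵥ t` and `M *ᵥ t ^ 2`.
theorem IsIrredTridiag.askeyWilsonRelation (hM : IsIrredTridiag M) {β γ γs ρ θ₀ θ₁ κ μ ν : F}
    (hρ : ∀ i j : Fin (d + 1), (i : ℕ) + 1 = j →
      t i ^ 2 - β * t i * t j + t j ^ 2 - γs * (t i + t j) = ρ)
    (h0 : M *ᵥ 1 = θ₀ • 1) (h1 : M *ᵥ t = θ₁ • t + κ • 1)
    (h2 : M *ᵥ t ^ 2 = (β * θ₁ - θ₀ + γ) • t ^ 2 + μ • t + ν • 1) :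
    AskeyWilsonRelation (toLin' M) (toLin' (diagonal t)) β γ γs ρ
      (μ - β * κ - γs * (θ₀ + θ₁)) (ν - γs * κ - ρ * θ₀) := by
  rw [askeyWilsonRelation_toLin'_iff]
  have hoff : ∀ i j, i ≠ j →
      M i j * (t j ^ 2 - β * t i * t j + t i ^ 2 - γs * (t i + t j) - ρ) = 0 := by
    intro i j hij
    have hij' := Fin.val_ne_of_ne hij
    obtain h | h | h : (i : ℕ) + 1 = j ∨ (j : ℕ) + 1 = i ∨
      ((i : ℕ) + 1 < j ∨ (j : ℕ) + 1 < i) := by omega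
    · linear_combination M i j * hρ i j h
    · linear_combination M i j * hρ j i h
    · rw [hM.1 i j h, zero_mul]
  intro i j
  split_ifs with hij
  · subst hij
    have hrow : ∑ j, M i j * (t j ^ 2 - β * t i * t j + t i ^ 2 - γs * (t i + t j) - ρ) =
        (M *ᵥ t ^ 2) i - (β * t i + γs) * (M *ᵥ t) i +
          (t i ^ 2 - γs * t i - ρ) * (M *ᵥ 1) i := by
      simp only [mulVec, dotProduct, Finset.mul_sum, ← Finset.sum_sub_distrib,
        ← Finset.sum_add_distrib, Pi.pow_apply, Pi.one_apply]
      exact Finset.sum_congr rfl fun j _ => by ring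
    rw [Finset.sum_eq_single i (fun j _ hj => hoff i j hj.symm) (by simp), h0, h1, h2] at hrow
    simp only [Pi.add_apply, Pi.smul_apply, Pi.pow_apply, Pi.one_apply, smul_eq_mul] at hrow
    linear_combination hrow
  · exact hoff i j hij

theorem IsIrredTridiag.exists_eigenbasis (hM : IsIrredTridiag M)
    (ht : ∀ i, i ≠ 0 → t i ≠ t 0) {β γ γs ρ ω η κ : F} {θ : ℕ → F}
    (hAW : AskeyWilsonRelation (toLin' M) (toLin' (diagonal t)) β γ γs ρ ω η)
    (hθ : Function.Injective fun i : Fin (d + 1) => θ i)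
    (hrec : ∀ n, n + 2 ≤ d → θ (n + 2) = β * θ (n + 1) - θ n + γ)
    (h0 : M *ᵥ 1 = θ 0 • 1) (h1 : M *ᵥ t = θ 1 • t + κ • 1) :
    ∃ bas : Module.Basis (Fin (d + 1)) F (Fin (d + 1) → F),
      (∀ i, toLin' M (bas i) = θ i • bas i) ∧
        IsIrredTridiag (LinearMap.toMatrix bas bas (toLin' (diagonal t))) := by
  have hDone : toLin' (diagonal t) 1 = t := by ext; simp [mulVec_diagonal]
  have htri : KrylovTriangular (toLin' M) (toLin' (diagonal t)) 1 d θ := by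
    refine hAW.krylovTriangular hrec h0 ?_
    rw [hDone, toLin'_apply, h1, add_sub_cancel_left]
    exact Submodule.smul_mem _ _ (pow_apply_mem_krylov _ _ Nat.zero_lt_one)
  obtain ⟨bas, hbas, hkrylov⟩ := htri.exists_eigenbasis (Module.finrank_fin_fun F)
    (fun _ => hM.eq_top_of_invariant ht) hθ
  obtain ⟨κ, hκ, hsymm⟩ := hM.exists_symmetrizer
  refine ⟨bas, hbas, isIrredTridiag_toMatrix_of_krylov (B := toLinearMap₂' F (diagonal κ))
    ?_ ?_ ?_ hθ hbas hkrylov⟩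
  · exact nondegenerate_toLinearMap₂'_iff.2 (nondegenerate_of_det_ne_zero
      (by simpa [det_diagonal, Finset.prod_ne_zero_iff] using hκ))
  · refine (isAdjointPair_toLinearMap₂' ..).2 ?_
    ext i j
    simpa [mul_comm] using hsymm j i
  · exact (isAdjointPair_toLinearMap₂' ..).2 (by simp [Matrix.IsAdjointPair, mul_comm])

theorem IsIrredTridiag.isLeonardPair (hM : IsIrredTridiag M) {θ : Fin (d + 1) → F}
    {bas : Module.Basis (Fin (d + 1)) F (Fin (d + 1) → F)}
    (hbas : ∀ i, toLin' M (bas i) = θ i • bas i)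
    (hT : IsIrredTridiag (LinearMap.toMatrix bas bas (toLin' (diagonal t)))) :
    IsLeonardPair d (toLin' M) (toLin' (diagonal t)) := by
  refine ⟨⟨Pi.basisFun F _, ?_, ?_⟩, bas, hT, isDiag_toMatrix_of_eigenbasis hbas⟩
  · rwa [LinearMap.toMatrix_eq_toMatrix', LinearMap.toMatrix'_toLin']
  · rw [LinearMap.toMatrix_eq_toMatrix', LinearMap.toMatrix'_toLin']
    exact isDiag_diagonal t

end IrreducibleTridiagonal

section Thm2Conds

open Matrix

variable {d : ℕ}

theorem triMat_mulVec {a b c : ℕ → F} (hb : b d = 0) (hc : c 0 = 0) (f : ℤ → F)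
    (i : Fin (d + 1)) :
    (triMat d a b c *ᵥ fun j => f (j : ℕ)) i =
      a i * f (i : ℕ) + b i * f ((i : ℕ) + 1) + c i * f ((i : ℕ) - 1) := by
  obtain ⟨i, hi⟩ := i
  have hentry : ∀ j : ℕ,
      (if i = j then a i else if i + 1 = j then b i else if j + 1 = i then c i else 0) * f j =
        (if i = j then a i * f i else 0) + (if i + 1 = j then b i * f (i + 1) else 0) +
          if j + 1 = i then c i * f (i - 1) else 0 := by
    intro j
    split_ifs <;> first | omega | (subst_vars; simp)
  have hbi : i + 1 ∈ Finset.range (d + 1) ∨ b i = 0 := by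
    obtain h | rfl : i + 1 < d + 1 ∨ i = d := by omega
    exacts [Or.inl (Finset.mem_range.2 h), Or.inr hb]
  simp only [mulVec, dotProduct, triMat, of_apply]
  rw [Fin.sum_univ_eq_sum_range (fun j =>
    (if i = j then a i else if i + 1 = j then b i else if j + 1 = i then c i else 0) * f j) (d + 1)]
  simp only [hentry, Finset.sum_add_distrib, Finset.sum_ite_eq]
  congr 1
  · rw [if_pos (Finset.mem_range.2 hi)]
    obtain h | h := hbi <;> simp [h]
  · cases i with
    | zero => simp [hc]
    | succ k =>
      simp only [Nat.add_right_cancel_iff, Finset.sum_ite_eq']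
      rw [if_pos (Finset.mem_range.2 (by omega))]

variable {θ θs : ℤ → F} {a b c : ℕ → F} {β γ γs astar0 Ω : F}

theorem Thm2Conds.isIrredTridiag (h : Thm2Conds d θ θs a b c β γ γs astar0 Ω) :
    IsIrredTridiag (triMat d a b c) := by
  obtain ⟨-, -, -, hbc, -⟩ := h
  refine ⟨fun i j hij => ?_, fun i j hij => ?_⟩
  · simp only [triMat, of_apply]
    rw [if_neg (by omega), if_neg (by omega), if_neg (by omega)]
  · simp only [triMat, of_apply]
    rw [if_neg (by omega)]
    obtain hij | hij := hij
    · have := left_ne_zero_of_mul (hbc j (by omega) (by omega))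
      rwa [if_pos hij, show (i : ℕ) = j - 1 by omega]
    · have := right_ne_zero_of_mul (hbc i (by omega) (by omega))
      rwa [if_neg (by omega), if_pos hij]

theorem Thm2Conds.mulVec_one (h : Thm2Conds d θ θs a b c β γ γs astar0 Ω) :
    triMat d a b c *ᵥ 1 = θ 0 • 1 := by
  obtain ⟨-, -, -, -, hb, hc, hsum, -⟩ := h
  ext i
  refine (triMat_mulVec hb hc (fun _ => 1) i).trans ?_
  simp only [Pi.smul_apply, Pi.one_apply, smul_eq_mul]
  linear_combination hsum i (by omega)

theorem Thm2Conds.mulVec_dual (h : Thm2Conds d θ θs a b c β γ γs astar0 Ω) :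
    (triMat d a b c *ᵥ fun i => θs (i : ℕ)) =
      (θ 1 • fun i : Fin (d + 1) => θs (i : ℕ)) + ((θ 0 - θ 1) * astar0) • 1 := by
  obtain ⟨-, -, -, -, hb, hc, hsum, hdual, -⟩ := h
  ext i
  rw [triMat_mulVec hb hc]
  simp only [Pi.add_apply, Pi.smul_apply, Pi.one_apply, smul_eq_mul]
  linear_combination hdual i (by omega) + θs (i : ℕ) * hsum i (by omega)

theorem Thm2Conds.mulVec_dual_sq (h : Thm2Conds d θ θs a b c β γ γs astar0 Ω) :
    ∃ μ ν : F, triMat d a b c *ᵥ (fun i : Fin (d + 1) => θs (i : ℕ)) ^ 2 =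
      (β * θ 1 - θ 0 + γ) • (fun i : Fin (d + 1) => θs (i : ℕ)) ^ 2 +
        (μ • fun i : Fin (d + 1) => θs (i : ℕ)) + ν • 1 := by
  obtain ⟨-, -, hrec, -, hb, hc, hsum, hdual, hΩ, hγ, -⟩ := h
  set μ := (θ 1 - θ 0) * (γs - (β + 2) * astar0) - Ω with hμ
  -- Row `i` of the claimed identity says `G i = ν`, so it suffices that `G` is constant.
  let G : ℕ → F := fun i => a i * θs i ^ 2 + b i * θs (i + 1) ^ 2 + c i * θs (i - 1) ^ 2 -
    (β * θ 1 - θ 0 + γ) * θs i ^ 2 - μ * θs i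
  have hG : ∀ i ≤ d, G i = G 0 := by
    intro i
    induction i with
    | zero => exact fun _ => rfl
    | succ i ih =>
      intro hi
      rw [← ih (by omega)]
      have hrec₁ := hrec (i + 1) (by omega) (by omega)
      have hdual₁ := hdual (i + 1) hi
      have hΩ₁ := hΩ (i + 1) (by omega) hi
      have hpred : ((i : ℤ) + 1) - 2 = i - 1 := by ring
      simp only [Nat.cast_add, Nat.cast_one, add_sub_cancel_right, Nat.add_sub_cancel, hpred]
        at hrec₁ hdual₁ hΩ₁
      simp only [G, Nat.cast_add, Nat.cast_one, add_sub_cancel_right]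
      linear_combination (θs (i + 1) + θs (i + 1 + 1)) * hdual₁
        - (θs (i - 1) + θs i) * hdual i (by omega) + (θs i - θs (i + 1)) * hΩ₁
        + θs (i + 1) ^ 2 * hsum (i + 1) hi - θs i ^ 2 * hsum i (by omega)
        - (θ 1 - θ 0) * (θs (i + 1) - astar0) * hrec₁
        + (θ 1 - θ 0) * (θs i - astar0) * hrec i (by omega) (by omega)
        + (θs i ^ 2 - θs (i + 1) ^ 2) * hγ - (θs (i + 1) - θs i) * hμ
  refine ⟨μ, G 0, ?_⟩
  ext i
  refine (triMat_mulVec hb hc (fun x => θs x ^ 2) i).trans ?_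
  simp only [Pi.add_apply, Pi.smul_apply, Pi.pow_apply, Pi.one_apply, smul_eq_mul]
  rw [← hG i (by omega)]
  ring

theorem Thm2Conds.exists_dual_invariant (h : Thm2Conds d θ θs a b c β γ γs astar0 Ω) :
    ∃ ρ : F, ∀ i : ℕ, i < d → θs i ^ 2 - β * θs i * θs (i + 1) + θs (i + 1) ^ 2 -
      γs * (θs i + θs (i + 1)) = ρ := by
  obtain ⟨-, -, hrec, -⟩ := h
  refine ⟨θs 0 ^ 2 - β * θs 0 * θs 1 + θs 1 ^ 2 - γs * (θs 0 + θs 1), fun i hi => ?_⟩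
  induction i with
  | zero => simp
  | succ i ih =>
    rw [← ih (by omega)]
    have hrec₁ := hrec (i + 1) (by omega) (by omega)
    simp only [Nat.cast_add, Nat.cast_one, add_sub_cancel_right] at hrec₁ ⊢
    linear_combination (θs i - θs (i + 1 + 1)) * hrec₁

theorem Thm2Conds.injective_eigenvalue (h : Thm2Conds d θ θs a b c β γ γs astar0 Ω) :
    Function.Injective fun i : Fin (d + 1) => θ (i : ℕ) := by
  obtain ⟨hθ, -⟩ := h
  intro i j hij
  by_contra hne
  exact hθ i j (by omega) (by omega) (by omega) (by omega) (by omega) hij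

theorem Thm2Conds.exists_eigenbasis (h : Thm2Conds d θ θs a b c β γ γs astar0 Ω) :
    ∃ bas : Module.Basis (Fin (d + 1)) F (Fin (d + 1) → F),
      (∀ i, toLin' (triMat d a b c) (bas i) = θ (i : ℕ) • bas i) ∧
        IsIrredTridiag (LinearMap.toMatrix bas bas
          (toLin' (diagonal fun i : Fin (d + 1) => θs (i : ℕ)))) := by
  obtain ⟨μ, ν, hsq⟩ := h.mulVec_dual_sq
  obtain ⟨ρ, hρ⟩ := h.exists_dual_invariant
  have hAW := h.isIrredTridiag.askeyWilsonRelation (γs := γs) (ρ := ρ) (fun i j hij => by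
    simpa [← hij] using hρ i (by omega)) h.mulVec_one h.mulVec_dual hsq
  refine h.isIrredTridiag.exists_eigenbasis (θ := fun n => θ n) ?_ hAW h.injective_eigenvalue ?_
    h.mulVec_one h.mulVec_dual
  · obtain ⟨-, hθs, -⟩ := h
    intro i hi
    have hpos : 0 < (i : ℕ) := Fin.pos_iff_ne_zero.2 hi
    simpa using hθs i (by omega) (by omega)
  · obtain ⟨-, -, -, -, -, -, -, -, -, -, hrec⟩ := h
    intro n hn
    have hrec₁ := hrec (n + 1) (by omega) (by omega)
    rw [add_sub_cancel_right, add_assoc, one_add_one_eq_two] at hrec₁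
    push_cast
    linear_combination hrec₁

theorem Thm2Conds.isLeonardPair (h : Thm2Conds d θ θs a b c β γ γs astar0 Ω) :
    IsLeonardPair d (toLin' (triMat d a b c))
      (toLin' (diagonal fun i : Fin (d + 1) => θs (i : ℕ))) := by
  obtain ⟨bas, hbas, htri⟩ := h.exists_eigenbasis
  exact h.isIrredTridiag.isLeonardPair hbas htri

theorem Thm2Conds.exists_idempSysOf (h : Thm2Conds d θ θs a b c β γ γs astar0 Ω) :
    ∃ E, IdempSysOf d (toLin' (triMat d a b c)) (fun i => θ (i : ℕ)) E := by
  obtain ⟨bas, hbas, -⟩ := h.exists_eigenbasis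
  exact exists_idempSysOf_of_eigenbasis h.injective_eigenvalue hbas

end Thm2Conds

section Brackets

/-- The bracket `[x] = x - x⁻¹` in which the differences of a `q`-Racah eigenvalue sequence factor;
`[q ^ n]` is an unnormalized `q`-integer. -/
def invSub (x : F) : F := x - x⁻¹

/-- The symmetrization `⟨x⟩ = x + x⁻¹`; the `q`-Racah eigenvalues are `⟨y q ^ (2 i - d)⟩`. -/
def invAdd (x : F) : F := x + x⁻¹

variable {a b c q x y : F}

theorem invAdd_inv (x : F) : invAdd x⁻¹ = invAdd x := by
  rw [invAdd, invAdd, inv_inv, add_comm]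

theorem invSub_mul_invSub (hx : x ≠ 0) (hy : y ≠ 0) :
    invSub x * invSub y = invAdd (x * y) - invAdd (x / y) := by
  simp only [invSub, invAdd]
  field_simp
  ring

theorem invAdd_mul_invAdd (hx : x ≠ 0) (hy : y ≠ 0) :
    invAdd x * invAdd y = invAdd (x * y) + invAdd (x / y) := by
  simp only [invAdd]
  field_simp
  ring

theorem invSub_mul_invAdd_self (hx : x ≠ 0) : invSub x * invAdd x = invSub (x ^ 2) := by
  simp only [invSub, invAdd]
  field_simp
  ring

theorem invSub_mul_zpow (y q : F) (n : ℤ) : invSub (y * q ^ n) = y * q ^ n - y⁻¹ * q ^ (-n) := by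
  rw [invSub, mul_inv, zpow_neg]

theorem invSub_zpow (q : F) (n : ℤ) : invSub (q ^ n) = q ^ n - q ^ (-n) := by
  rw [invSub, zpow_neg]

theorem invAdd_mul_zpow (y q : F) (n : ℤ) : invAdd (y * q ^ n) = y * q ^ n + y⁻¹ * q ^ (-n) := by
  rw [invAdd, mul_inv, zpow_neg]

theorem invSub_ne_zero_iff (hx : x ≠ 0) : invSub x ≠ 0 ↔ x ^ 2 ≠ 1 := by
  rw [invSub, sub_ne_zero, Ne, ← mul_eq_one_iff_eq_inv₀ hx, ← sq]

theorem invAdd_eq_invAdd_iff (hx : x ≠ 0) (hy : y ≠ 0) :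
    invAdd x = invAdd y ↔ x = y ∨ x * y = 1 := by
  have hfactor : (invAdd x - invAdd y) * (x * y) = (x - y) * (x * y - 1) := by
    simp only [invAdd]
    field_simp
    ring
  rw [← sub_eq_zero, ← mul_left_inj' (mul_ne_zero hx hy), hfactor, zero_mul, mul_eq_zero,
    sub_eq_zero, sub_eq_zero]

/-- The identity behind both (vi) and (vii): for `s = ⟨c⟩`, the two terms on the left are the
numerators of `b` and `c`, with the common factor `[b q ^ (m - n)]` of their denominators on the
right. -/
theorem qRacah_numerator_identity (ha : a ≠ 0) (hb : b ≠ 0) (hq : q ≠ 0) (s : F) {k l m n : ℤ}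
    (hk : m - n = k) (hl : m + n = l) :
    invSub (q ^ n) * invSub (b * q ^ (-n)) * (s - invAdd (a * b * q ^ k)) -
        invSub (q ^ m) * invSub (b * q ^ m) * (invAdd (a⁻¹ * b * q ^ k) - s) =
      invSub (b * q ^ k) * (invSub (a * q ^ (-l)) * invAdd (b * q ^ k) - invSub a * invAdd b +
        invSub (q ^ l) * s) := by
  subst hk hl
  simp only [invSub, invAdd, zpow_neg, zpow_sub₀ hq, zpow_add₀ hq]
  have := zpow_ne_zero m hq
  have := zpow_ne_zero n hq
  generalize q ^ m = x at *
  generalize q ^ n = y at *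
  field_simp
  ring

/-- The case `m = 0` of `qRacah_numerator_identity` divided by `[b q ^ (-n)]`, which may vanish. -/
theorem invSub_mul_sub_invAdd (ha : a ≠ 0) (hb : b ≠ 0) (hx : x ≠ 0) (s : F) :
    invSub x * (s - invAdd (a * b * x⁻¹)) =
      invSub (a * x⁻¹) * invAdd (b * x⁻¹) - invSub a * invAdd b + invSub x * s := by
  simp only [invSub, invAdd]
  field_simp
  ring

theorem invAdd_ne_invAdd_mul_zpow (hc : c ≠ 0) (hy : y ≠ 0) (hq : q ≠ 0) {k : ℤ}
    (hmul : y * c ≠ q ^ (-k)) (hdiv : y * c⁻¹ ≠ q ^ (-k)) : invAdd c ≠ invAdd (y * q ^ k) := by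
  have hk := zpow_ne_zero k hq
  rw [zpow_neg, Ne, ← mul_eq_one_iff_eq_inv₀ hk] at hmul hdiv
  rw [Ne, invAdd_eq_invAdd_iff hc (mul_ne_zero hy hk), not_or]
  refine ⟨fun heq => hdiv ?_, fun heq => hmul ?_⟩
  · rw [mul_right_comm, ← heq, mul_inv_cancel₀ hc]
  · rw [← heq]; ring

end Brackets

section QRacah

variable {d : ℕ} {a b c q : F}

/-- The `q`-Racah eigenvalue sequence with base `y`: `θ` for `y = a`, `θ*` for `y = b`. It is
indexed by `ℤ` because of the virtual eigenvalues `θ_{-1}`, `θ*_{-1}` and `θ*_{d+1}`. -/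
def qRacahEigenvalue (d : ℕ) (q y : F) (i : ℤ) : F :=
  y * q ^ (2 * i - (d : ℤ)) + y⁻¹ * q ^ ((d : ℤ) - 2 * i)

/-- The superdiagonal intersection numbers `b_i` of `q`-Racah type, with `b_d = 0`. -/
def qRacahB (d : ℕ) (a b c q : F) (i : ℕ) : F :=
  if i = 0 then
    (q ^ (d : ℤ) - q ^ (-(d : ℤ))) * (c * q - a⁻¹ * b⁻¹ * q ^ (d : ℤ)) *
      (q⁻¹ - a * b * c⁻¹ * q ^ (-(d : ℤ))) /
      (b * q ^ (1 - (d : ℤ)) - b⁻¹ * q ^ ((d : ℤ) - 1))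
  else if i = d then 0
  else
    (q ^ ((d : ℤ) - (i : ℤ)) - q ^ ((i : ℤ) - (d : ℤ))) *
      (b * q ^ ((i : ℤ) - (d : ℤ)) - b⁻¹ * q ^ ((d : ℤ) - (i : ℤ))) *
      (c * q ^ ((i : ℤ) + 1) - a⁻¹ * b⁻¹ * q ^ ((d : ℤ) - (i : ℤ))) *
      (q ^ (-(i : ℤ) - 1) - a * b * c⁻¹ * q ^ ((i : ℤ) - (d : ℤ))) /
      ((b * q ^ (2 * (i : ℤ) - (d : ℤ)) - b⁻¹ * q ^ ((d : ℤ) - 2 * (i : ℤ))) *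
        (b * q ^ (2 * (i : ℤ) - (d : ℤ) + 1) - b⁻¹ * q ^ ((d : ℤ) - 2 * (i : ℤ) - 1)))

/-- The subdiagonal intersection numbers `c_i` of `q`-Racah type, with `c_0 = 0`. -/
def qRacahC (d : ℕ) (a b c q : F) (i : ℕ) : F :=
  if i = 0 then 0
  else if i = d then
    (q ^ (d : ℤ) - q ^ (-(d : ℤ))) * (a⁻¹ * q⁻¹ - b⁻¹ * c⁻¹ * q ^ (-(d : ℤ))) *
      (b * q ^ (d : ℤ) - a * c * q) /
      (b * q ^ ((d : ℤ) - 1) - b⁻¹ * q ^ (1 - (d : ℤ)))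
  else
    (q ^ (i : ℤ) - q ^ (-(i : ℤ))) * (b * q ^ (i : ℤ) - b⁻¹ * q ^ (-(i : ℤ))) *
      (a⁻¹ * q ^ ((i : ℤ) - (d : ℤ) - 1) - b⁻¹ * c⁻¹ * q ^ (-(i : ℤ))) *
      (b * q ^ (i : ℤ) - a * c * q ^ ((d : ℤ) - (i : ℤ) + 1)) /
      ((b * q ^ (2 * (i : ℤ) - (d : ℤ) - 1) - b⁻¹ * q ^ ((d : ℤ) - 2 * (i : ℤ) + 1)) *
        (b * q ^ (2 * (i : ℤ) - (d : ℤ)) - b⁻¹ * q ^ ((d : ℤ) - 2 * (i : ℤ))))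

/-- The scalar `a*_0` of condition (vi) for `q`-Racah type: the first diagonal entry of `A*` in its
tridiagonal form. -/
def qRacahDualDiag (d : ℕ) (a b c q : F) : F :=
  ((b + b⁻¹) * (a * q - a⁻¹ * q⁻¹) - (c + c⁻¹) * (q ^ (d : ℤ) - q ^ (-(d : ℤ)))) /
    (a * q ^ (1 - (d : ℤ)) - a⁻¹ * q ^ ((d : ℤ) - 1))

/-- The nonvanishing conditions on the parameters of a Leonard pair of `q`-Racah type. -/
structure QRacahAdmissible (d : ℕ) (a b c q : F) : Prop where
  one_le : 1 ≤ d
  a_ne_zero : a ≠ 0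
  b_ne_zero : b ≠ 0
  c_ne_zero : c ≠ 0
  q_ne_zero : q ≠ 0
  zpow_ne_one : ∀ i : ℤ, 1 ≤ i → i ≤ d → q ^ (2 * i) ≠ 1
  a_sq_ne : ∀ i : ℤ, 1 - (d : ℤ) ≤ i → i ≤ (d : ℤ) - 1 → a ^ 2 ≠ q ^ (2 * i)
  b_sq_ne : ∀ i : ℤ, 1 - (d : ℤ) ≤ i → i ≤ (d : ℤ) - 1 → b ^ 2 ≠ q ^ (2 * i)
  abc_ne : ∀ i : ℤ, 1 ≤ i → i ≤ d →
    a * b * c ≠ q ^ ((d : ℤ) + 1 - 2 * i) ∧ a⁻¹ * b * c ≠ q ^ ((d : ℤ) + 1 - 2 * i) ∧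
    a * b⁻¹ * c ≠ q ^ ((d : ℤ) + 1 - 2 * i) ∧ a * b * c⁻¹ ≠ q ^ ((d : ℤ) + 1 - 2 * i)

theorem qRacahEigenvalue_eq_invAdd (d : ℕ) (q y : F) (i : ℤ) :
    qRacahEigenvalue d q y i = invAdd (y * q ^ (2 * i - d)) := by
  rw [qRacahEigenvalue, invAdd_mul_zpow, neg_sub]

theorem qRacahEigenvalue_sub {y : F} (hq : q ≠ 0) (hy : y ≠ 0) {i j m n : ℤ}
    (hm : i - j = m) (hn : i + j - d = n) :
    qRacahEigenvalue d q y i - qRacahEigenvalue d q y j = invSub (q ^ m) * invSub (y * q ^ n) := by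
  have hmul : y * q ^ (2 * i - d) = y * q ^ n * q ^ m := by
    rw [mul_assoc, ← zpow_add₀ hq, ← hm, ← hn]; ring_nf
  have hdiv : y * q ^ (2 * j - d) = y * q ^ n / q ^ m := by
    rw [mul_div_assoc, ← zpow_sub₀ hq, ← hm, ← hn]; ring_nf
  rw [qRacahEigenvalue_eq_invAdd, qRacahEigenvalue_eq_invAdd, hmul, hdiv, mul_comm (invSub (q ^ m)),
    invSub_mul_invSub (mul_ne_zero hy (zpow_ne_zero _ hq)) (zpow_ne_zero _ hq)]

theorem qRacahEigenvalue_add {y : F} (hq : q ≠ 0) (hy : y ≠ 0) {i : ℤ} {n : ℤ}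
    (hn : 2 * i - d - 1 = n) :
    qRacahEigenvalue d q y (i - 1) + qRacahEigenvalue d q y i =
      invAdd q * invAdd (y * q ^ n) := by
  have hmul : y * q ^ (2 * i - d) = y * q ^ n * q := by
    rw [mul_assoc, ← zpow_add_one₀ hq, ← hn]; ring_nf
  have hdiv : y * q ^ (2 * (i - 1) - d) = y * q ^ n / q := by
    rw [div_eq_mul_inv, mul_assoc, ← zpow_sub_one₀ hq, ← hn]; ring_nf
  rw [qRacahEigenvalue_eq_invAdd, qRacahEigenvalue_eq_invAdd, hmul, hdiv, mul_comm (invAdd q),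
    invAdd_mul_invAdd (mul_ne_zero hy (zpow_ne_zero _ hq)) hq, add_comm]

theorem qRacahEigenvalue_recurrence (hq : q ≠ 0) (y : F) (i : ℤ) :
    qRacahEigenvalue d q y (i - 1) - (q ^ (2 : ℤ) + q ^ (-2 : ℤ)) * qRacahEigenvalue d q y i +
      qRacahEigenvalue d q y (i + 1) = 0 := by
  simp only [qRacahEigenvalue, mul_sub, mul_add, zpow_sub₀ hq, zpow_add₀ hq, zpow_neg, mul_one]
  field_simp
  ring

theorem qRacahB_zero_mul (ha : a ≠ 0) (hb : b ≠ 0) (hc : c ≠ 0) (hq : q ≠ 0)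
    (h : invSub (b * q ^ (1 - (d : ℤ))) ≠ 0) :
    qRacahB d a b c q 0 * invSub (b * q ^ (1 - (d : ℤ))) =
      invSub (q ^ (d : ℤ)) * (invAdd c - invAdd (a * b * q ^ (1 - (d : ℤ)))) := by
  rw [qRacahB, if_pos rfl, ← neg_sub 1 (d : ℤ), ← invSub_mul_zpow, div_mul_cancel₀ _ h,
    ← invSub_zpow, mul_assoc]
  congr 1
  simp only [invAdd, zpow_sub₀ hq, zpow_neg, zpow_one]
  field_simp
  ring

theorem qRacahC_self_mul (hd : d ≠ 0) (ha : a ≠ 0) (hb : b ≠ 0) (hc : c ≠ 0) (hq : q ≠ 0)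
    (h : invSub (b * q ^ ((d : ℤ) - 1)) ≠ 0) :
    qRacahC d a b c q d * invSub (b * q ^ ((d : ℤ) - 1)) =
      invSub (q ^ (d : ℤ)) * (invAdd (a⁻¹ * b * q ^ ((d : ℤ) - 1)) - invAdd c) := by
  rw [qRacahC, if_neg hd, if_pos rfl, ← neg_sub (d : ℤ) 1, ← invSub_mul_zpow, div_mul_cancel₀ _ h,
    ← invSub_zpow, mul_assoc]
  congr 1
  simp only [invAdd, zpow_sub₀ hq, zpow_neg, zpow_one]
  field_simp
  ring

theorem qRacahB_mul_of_pos (ha : a ≠ 0) (hb : b ≠ 0) (hc : c ≠ 0) (hq : q ≠ 0) {i : ℕ} (hi : 0 < i)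
    (hid : i < d) (h₀ : invSub (b * q ^ (2 * (i : ℤ) - d)) ≠ 0)
    (h₁ : invSub (b * q ^ (2 * (i : ℤ) - d + 1)) ≠ 0) :
    qRacahB d a b c q i *
        (invSub (b * q ^ (2 * (i : ℤ) - d)) * invSub (b * q ^ (2 * (i : ℤ) - d + 1))) =
      invSub (q ^ ((d : ℤ) - i)) * invSub (b * q ^ ((i : ℤ) - d)) *
        (invAdd c - invAdd (a * b * q ^ (2 * (i : ℤ) - d + 1))) := by
  have h₁' : (d : ℤ) - 2 * i - 1 = -(2 * (i : ℤ) - d + 1) := by ring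
  rw [qRacahB, if_neg hi.ne', if_neg hid.ne, h₁', ← neg_sub (2 * (i : ℤ)), ← invSub_mul_zpow,
    ← invSub_mul_zpow, div_mul_cancel₀ _ (mul_ne_zero h₀ h₁), invSub_zpow, invSub_mul_zpow,
    neg_sub, neg_sub, mul_assoc]
  congr 1
  simp only [invAdd, two_mul, zpow_sub₀ hq, zpow_add₀ hq, zpow_neg, zpow_one]
  have := zpow_ne_zero i hq
  field_simp
  ring

theorem qRacahC_mul_of_lt (ha : a ≠ 0) (hb : b ≠ 0) (hc : c ≠ 0) (hq : q ≠ 0) {i : ℕ} (hi : 0 < i)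
    (hid : i < d) (h₀ : invSub (b * q ^ (2 * (i : ℤ) - d)) ≠ 0)
    (h₁ : invSub (b * q ^ (2 * (i : ℤ) - d - 1)) ≠ 0) :
    qRacahC d a b c q i *
        (invSub (b * q ^ (2 * (i : ℤ) - d - 1)) * invSub (b * q ^ (2 * (i : ℤ) - d))) =
      invSub (q ^ (i : ℤ)) * invSub (b * q ^ (i : ℤ)) *
        (invAdd (a⁻¹ * b * q ^ (2 * (i : ℤ) - d - 1)) - invAdd c) := by
  have h₁' : (d : ℤ) - 2 * i + 1 = -(2 * (i : ℤ) - d - 1) := by ring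
  rw [qRacahC, if_neg hi.ne', if_neg hid.ne, h₁', ← neg_sub (2 * (i : ℤ)), ← invSub_mul_zpow,
    ← invSub_mul_zpow, ← invSub_mul_zpow, div_mul_cancel₀ _ (mul_ne_zero h₁ h₀), ← invSub_zpow,
    mul_assoc]
  congr 1
  simp only [invAdd, two_mul, zpow_sub₀ hq, zpow_add₀ hq, zpow_neg, zpow_one]
  field_simp
  ring

theorem invSub_mul_zpow_ne_zero {y : F} (hq : q ≠ 0) (hy : y ≠ 0)
    (hy2 : ∀ i : ℤ, 1 - (d : ℤ) ≤ i → i ≤ (d : ℤ) - 1 → y ^ 2 ≠ q ^ (2 * i)) {n : ℤ}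
    (hn : 1 - (d : ℤ) ≤ n) (hnd : n ≤ (d : ℤ) - 1) : invSub (y * q ^ n) ≠ 0 := by
  rw [invSub_ne_zero_iff (mul_ne_zero hy (zpow_ne_zero n hq)), mul_pow, ← zpow_natCast (q ^ n),
    ← zpow_mul, Ne, mul_eq_one_iff_eq_inv₀ (zpow_ne_zero _ hq), ← zpow_neg]
  convert hy2 (-n) (by omega) (by omega) using 3
  push_cast
  ring

namespace QRacahAdmissible

variable {y : F}

theorem invSub_zpow_ne_zero (h : QRacahAdmissible d a b c q) {n : ℤ} (hn : 1 ≤ n) (hnd : n ≤ d) :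
    invSub (q ^ n) ≠ 0 := by
  rw [invSub_ne_zero_iff (zpow_ne_zero n h.q_ne_zero), ← zpow_natCast, ← zpow_mul, mul_comm]
  exact h.zpow_ne_one n hn hnd

theorem invSub_a_mul_zpow_ne_zero (h : QRacahAdmissible d a b c q) {n : ℤ}
    (hn : 1 - (d : ℤ) ≤ n) (hnd : n ≤ (d : ℤ) - 1) : invSub (a * q ^ n) ≠ 0 :=
  invSub_mul_zpow_ne_zero h.q_ne_zero h.a_ne_zero h.a_sq_ne hn hnd

theorem invSub_b_mul_zpow_ne_zero (h : QRacahAdmissible d a b c q) {n : ℤ}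
    (hn : 1 - (d : ℤ) ≤ n) (hnd : n ≤ (d : ℤ) - 1) : invSub (b * q ^ n) ≠ 0 :=
  invSub_mul_zpow_ne_zero h.q_ne_zero h.b_ne_zero h.b_sq_ne hn hnd

theorem qRacahEigenvalue_ne (h : QRacahAdmissible d a b c q) (hy : y ≠ 0)
    (hy2 : ∀ i : ℤ, 1 - (d : ℤ) ≤ i → i ≤ (d : ℤ) - 1 → y ^ 2 ≠ q ^ (2 * i)) {i j : ℤ}
    (hi : 0 ≤ i) (hij : i < j) (hj : j ≤ d) :
    qRacahEigenvalue d q y j ≠ qRacahEigenvalue d q y i := by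
  rw [← sub_ne_zero, qRacahEigenvalue_sub h.q_ne_zero hy rfl rfl]
  exact mul_ne_zero (h.invSub_zpow_ne_zero (by omega) (by omega))
    (invSub_mul_zpow_ne_zero h.q_ne_zero hy hy2 (by omega) (by omega))

theorem qRacahB_mul (h : QRacahAdmissible d a b c q) {i : ℕ} (hi : i < d) :
    qRacahB d a b c q i *
        (invSub (b * q ^ (2 * (i : ℤ) - d)) * invSub (b * q ^ (2 * (i : ℤ) - d + 1))) =
      invSub (q ^ ((d : ℤ) - i)) * invSub (b * q ^ ((i : ℤ) - d)) *
        (invAdd c - invAdd (a * b * q ^ (2 * (i : ℤ) - d + 1))) := by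
  rcases i.eq_zero_or_pos with rfl | hi₀
  · have hB := qRacahB_zero_mul h.a_ne_zero h.b_ne_zero h.c_ne_zero h.q_ne_zero
      (h.invSub_b_mul_zpow_ne_zero le_rfl (by omega))
    rw [← neg_add_eq_sub] at hB
    simp only [Nat.cast_zero, mul_zero, zero_sub, sub_zero]
    linear_combination invSub (b * q ^ (-(d : ℤ))) * hB
  · exact qRacahB_mul_of_pos h.a_ne_zero h.b_ne_zero h.c_ne_zero h.q_ne_zero hi₀ hi
      (h.invSub_b_mul_zpow_ne_zero (by omega) (by omega))
      (h.invSub_b_mul_zpow_ne_zero (by omega) (by omega))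

theorem qRacahC_mul (h : QRacahAdmissible d a b c q) {i : ℕ} (hi : 1 ≤ i) (hid : i ≤ d) :
    qRacahC d a b c q i *
        (invSub (b * q ^ (2 * (i : ℤ) - d - 1)) * invSub (b * q ^ (2 * (i : ℤ) - d))) =
      invSub (q ^ (i : ℤ)) * invSub (b * q ^ (i : ℤ)) *
        (invAdd (a⁻¹ * b * q ^ (2 * (i : ℤ) - d - 1)) - invAdd c) := by
  rcases hid.eq_or_lt with rfl | hid
  · have hC := qRacahC_self_mul (by omega) h.a_ne_zero h.b_ne_zero h.c_ne_zero h.q_ne_zero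
      (h.invSub_b_mul_zpow_ne_zero (by omega) le_rfl)
    simp only [two_mul, add_sub_cancel_right]
    linear_combination invSub (b * q ^ (i : ℤ)) * hC
  · exact qRacahC_mul_of_lt h.a_ne_zero h.b_ne_zero h.c_ne_zero h.q_ne_zero hi hid
      (h.invSub_b_mul_zpow_ne_zero (by omega) (by omega))
      (h.invSub_b_mul_zpow_ne_zero (by omega) (by omega))

theorem invAdd_sub_ne_zero (h : QRacahAdmissible d a b c q) {i : ℕ} (hi : i < d) {k : ℤ}
    (hk : 2 * (i : ℤ) - d + 1 = k) : invAdd c - invAdd (a * b * q ^ k) ≠ 0 := by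
  obtain ⟨habc, -, -, habc'⟩ := h.abc_ne (i + 1) (by omega) (by omega)
  rw [show (d : ℤ) + 1 - 2 * (i + 1) = -k by omega] at habc habc'
  exact sub_ne_zero.2 (invAdd_ne_invAdd_mul_zpow h.c_ne_zero (mul_ne_zero h.a_ne_zero h.b_ne_zero)
    h.q_ne_zero habc habc')

theorem sub_invAdd_ne_zero (h : QRacahAdmissible d a b c q) {i : ℕ} (hi : 1 ≤ i) (hid : i ≤ d)
    {k : ℤ} (hk : 2 * (i : ℤ) - d - 1 = k) : invAdd (a⁻¹ * b * q ^ k) - invAdd c ≠ 0 := by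
  obtain ⟨-, hmul, -, -⟩ := h.abc_ne i (by omega) (by omega)
  obtain ⟨-, -, hdiv, -⟩ := h.abc_ne (d + 1 - i) (by omega) (by omega)
  rw [show (d : ℤ) + 1 - 2 * i = -k by omega] at hmul
  rw [show (d : ℤ) + 1 - 2 * (d + 1 - i) = k by omega, ← inv_injective.ne_iff, ← zpow_neg,
    mul_inv, mul_inv, inv_inv] at hdiv
  exact sub_ne_zero.2 (invAdd_ne_invAdd_mul_zpow h.c_ne_zero
    (mul_ne_zero (inv_ne_zero h.a_ne_zero) h.b_ne_zero) h.q_ne_zero hmul hdiv).symm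

theorem qRacahB_ne_zero (h : QRacahAdmissible d a b c q) {i : ℕ} (hi : i < d) :
    qRacahB d a b c q i ≠ 0 := by
  rcases i.eq_zero_or_pos with rfl | hi₀
  · exact left_ne_zero_of_mul <|
      (qRacahB_zero_mul h.a_ne_zero h.b_ne_zero h.c_ne_zero h.q_ne_zero
        (h.invSub_b_mul_zpow_ne_zero le_rfl (by omega))).trans_ne <|
      mul_ne_zero (h.invSub_zpow_ne_zero (by omega) le_rfl)
        (h.invAdd_sub_ne_zero hi (by omega))
  · exact left_ne_zero_of_mul <| (h.qRacahB_mul hi).trans_ne <| mul_ne_zero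
      (mul_ne_zero (h.invSub_zpow_ne_zero (by omega) (by omega))
        (h.invSub_b_mul_zpow_ne_zero (by omega) (by omega)))
      (h.invAdd_sub_ne_zero hi rfl)

theorem qRacahC_ne_zero (h : QRacahAdmissible d a b c q) {i : ℕ} (hi : 1 ≤ i) (hid : i ≤ d) :
    qRacahC d a b c q i ≠ 0 := by
  rcases hid.eq_or_lt with rfl | hid'
  · exact left_ne_zero_of_mul <|
      (qRacahC_self_mul (by omega) h.a_ne_zero h.b_ne_zero h.c_ne_zero h.q_ne_zero
        (h.invSub_b_mul_zpow_ne_zero (by omega) le_rfl)).trans_ne <|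
      mul_ne_zero (h.invSub_zpow_ne_zero (by omega) le_rfl)
        (h.sub_invAdd_ne_zero hi hid (by omega))
  · exact left_ne_zero_of_mul <| (h.qRacahC_mul hi hid).trans_ne <| mul_ne_zero
      (mul_ne_zero (h.invSub_zpow_ne_zero (by omega) (by omega))
        (h.invSub_b_mul_zpow_ne_zero (by omega) (by omega)))
      (h.sub_invAdd_ne_zero hi hid rfl)

theorem qRacahDualDiag_mul (h : QRacahAdmissible d a b c q) :
    qRacahDualDiag d a b c q * invSub (a * q ^ (1 - (d : ℤ))) =
      invSub (a * q) * invAdd b - invSub (q ^ (d : ℤ)) * invAdd c := by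
  have hne : invSub (a * q ^ (1 - (d : ℤ))) ≠ 0 := h.invSub_a_mul_zpow_ne_zero le_rfl (by
    have := h.one_le; omega)
  rw [qRacahDualDiag, ← neg_sub 1 (d : ℤ), ← invSub_mul_zpow, div_mul_cancel₀ _ hne, ← invSub_zpow]
  simp only [invSub, invAdd, mul_inv]
  ring

theorem three_term_relation_zero (h : QRacahAdmissible d a b c q) :
    -(qRacahB d a b c q 0 * (qRacahEigenvalue d q b 0 - qRacahEigenvalue d q b 1)) =
      (qRacahEigenvalue d q a 1 - qRacahEigenvalue d q a 0) *
        (qRacahEigenvalue d q b 0 - qRacahDualDiag d a b c q) := by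
  have hq := h.q_ne_zero
  have hB := qRacahB_zero_mul h.a_ne_zero h.b_ne_zero h.c_ne_zero hq
    (h.invSub_b_mul_zpow_ne_zero le_rfl (by have := h.one_le; omega))
  have hident := invSub_mul_sub_invAdd (mul_ne_zero h.a_ne_zero hq) h.b_ne_zero
    (zpow_ne_zero (d : ℤ) hq) (invAdd c)
  have hab : a * q * b * (q ^ (d : ℤ))⁻¹ = a * b * q ^ (1 - (d : ℤ)) := by
    rw [zpow_sub₀ hq, zpow_one]; ring
  have haq : a * q * (q ^ (d : ℤ))⁻¹ = a * q ^ (1 - (d : ℤ)) := by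
    rw [zpow_sub₀ hq, zpow_one]; ring
  rw [hab, haq, ← zpow_neg] at hident
  rw [← mul_neg, neg_sub, qRacahEigenvalue_sub hq h.b_ne_zero (m := 1) (n := 1 - d) rfl (by ring),
    qRacahEigenvalue_sub hq h.a_ne_zero (m := 1) (n := 1 - d) rfl (by ring),
    qRacahEigenvalue_eq_invAdd, mul_zero, zero_sub]
  linear_combination invSub (q ^ (1 : ℤ)) * (hB + hident + h.qRacahDualDiag_mul)

theorem three_term_relation_self (h : QRacahAdmissible d a b c q) :
    qRacahC d a b c q d * (qRacahEigenvalue d q b (d - 1) - qRacahEigenvalue d q b d) =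
      (qRacahEigenvalue d q a 1 - qRacahEigenvalue d q a 0) *
        (qRacahEigenvalue d q b d - qRacahDualDiag d a b c q) := by
  have hq := h.q_ne_zero
  have hd := h.one_le
  have hC := qRacahC_self_mul (by omega) h.a_ne_zero h.b_ne_zero h.c_ne_zero hq
    (h.invSub_b_mul_zpow_ne_zero (by omega) le_rfl)
  have hident := invSub_mul_sub_invAdd (mul_ne_zero h.a_ne_zero hq) (inv_ne_zero h.b_ne_zero)
    (zpow_ne_zero (d : ℤ) hq) (invAdd c)
  have hab : a * q * b⁻¹ * (q ^ (d : ℤ))⁻¹ = (a⁻¹ * b * q ^ ((d : ℤ) - 1))⁻¹ := by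
    rw [zpow_sub₀ hq, zpow_one, mul_inv, mul_inv, inv_inv, inv_div]; ring
  have haq : a * q * (q ^ (d : ℤ))⁻¹ = a * q ^ (1 - (d : ℤ)) := by
    rw [zpow_sub₀ hq, zpow_one]; ring
  rw [hab, haq, ← mul_inv] at hident
  simp only [invAdd_inv] at hident
  rw [← neg_sub (qRacahEigenvalue d q b d),
    qRacahEigenvalue_sub hq h.b_ne_zero (m := 1) (n := d - 1) (by ring) (by ring),
    qRacahEigenvalue_sub hq h.a_ne_zero (m := 1) (n := 1 - d) rfl (by ring),
    qRacahEigenvalue_eq_invAdd, two_mul, add_sub_cancel_right]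
  linear_combination invSub (q ^ (1 : ℤ)) * (hident + h.qRacahDualDiag_mul - hC)

theorem three_term_relation_of_pos_of_lt (h : QRacahAdmissible d a b c q) {i : ℕ} (hi : 0 < i)
    (hid : i < d) :
    qRacahC d a b c q i * (qRacahEigenvalue d q b (i - 1) - qRacahEigenvalue d q b i) -
        qRacahB d a b c q i * (qRacahEigenvalue d q b i - qRacahEigenvalue d q b (i + 1)) =
      (qRacahEigenvalue d q a 1 - qRacahEigenvalue d q a 0) *
        (qRacahEigenvalue d q b i - qRacahDualDiag d a b c q) := by
  have hq := h.q_ne_zero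
  have hne : invSub (b * q ^ (2 * (i : ℤ) - d)) ≠ 0 :=
    h.invSub_b_mul_zpow_ne_zero (by omega) (by omega)
  have hnum := qRacah_numerator_identity (mul_ne_zero h.a_ne_zero hq) h.b_ne_zero hq (invAdd c)
    (k := 2 * i - d) (l := d) (m := i) (n := d - i) (by ring) (by ring)
  have hab : a * q * b * q ^ (2 * (i : ℤ) - d) = a * b * q ^ (2 * (i : ℤ) - d + 1) := by
    rw [zpow_add_one₀ hq]; ring
  have hab' : (a * q)⁻¹ * b * q ^ (2 * (i : ℤ) - d) = a⁻¹ * b * q ^ (2 * (i : ℤ) - d - 1) := by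
    rw [zpow_sub_one₀ hq, mul_inv]; ring
  have haq : a * q * q ^ (-(d : ℤ)) = a * q ^ (1 - (d : ℤ)) := by
    rw [mul_assoc, ← zpow_one_add₀ hq, sub_eq_add_neg]
  rw [hab, hab', haq, neg_sub] at hnum
  rw [← neg_sub (qRacahEigenvalue d q b i), ← neg_sub (qRacahEigenvalue d q b (i + 1)),
    qRacahEigenvalue_sub hq h.b_ne_zero (m := 1) (n := 2 * i - d - 1) (by ring) (by ring),
    qRacahEigenvalue_sub hq h.b_ne_zero (m := 1) (n := 2 * i - d + 1) (by ring) (by ring),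
    qRacahEigenvalue_sub hq h.a_ne_zero (m := 1) (n := 1 - d) rfl (by ring),
    qRacahEigenvalue_eq_invAdd]
  refine mul_left_cancel₀ hne ?_
  linear_combination invSub (q ^ (1 : ℤ)) * (h.qRacahB_mul hid - h.qRacahC_mul hi hid.le + hnum +
    invSub (b * q ^ (2 * (i : ℤ) - d)) * h.qRacahDualDiag_mul)

theorem four_term_relation (h : QRacahAdmissible d a b c q) {i : ℕ} (hi : 1 ≤ i) (hid : i ≤ d) :
    qRacahC d a b c q i * (qRacahEigenvalue d q b (i - 1) - qRacahEigenvalue d q b (i + 1)) -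
        qRacahB d a b c q (i - 1) * (qRacahEigenvalue d q b (i - 2) - qRacahEigenvalue d q b i) -
        (qRacahEigenvalue d q a 0 - qRacahEigenvalue d q a (-1)) *
          (qRacahEigenvalue d q b (i - 1) + qRacahEigenvalue d q b i) =
      invSub (q ^ 2) * (invSub (q ^ ((d : ℤ) + 1)) * invAdd c - invSub a * invAdd b) := by
  have hq := h.q_ne_zero
  have hne : invSub (b * q ^ (2 * (i : ℤ) - d - 1)) ≠ 0 :=
    h.invSub_b_mul_zpow_ne_zero (by omega) (by omega)
  have hnum := qRacah_numerator_identity h.a_ne_zero h.b_ne_zero hq (invAdd c)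
    (k := 2 * i - d - 1) (l := d + 1) (m := i) (n := d + 1 - i) (by ring) (by ring)
  have hB := h.qRacahB_mul (i := i - 1) (by omega)
  rw [Nat.cast_pred hi, show 2 * ((i : ℤ) - 1) - d + 1 = 2 * i - d - 1 by ring,
    show (d : ℤ) - (i - 1) = d + 1 - i by ring, show (i : ℤ) - 1 - d = -(d + 1 - i) by ring] at hB
  rw [← neg_sub (qRacahEigenvalue d q b (i + 1)), ← neg_sub (qRacahEigenvalue d q b i),
    qRacahEigenvalue_sub hq h.b_ne_zero (m := 2) (n := 2 * i - d) (by ring) (by ring),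
    qRacahEigenvalue_sub hq h.b_ne_zero (m := 2) (n := 2 * (i - 1) - d) (by ring) (by ring),
    qRacahEigenvalue_sub hq h.a_ne_zero (m := 1) (n := -(d + 1)) (by ring) (by ring),
    qRacahEigenvalue_add hq h.b_ne_zero rfl, zpow_ofNat, zpow_one, ← invSub_mul_invAdd_self hq]
  refine mul_left_cancel₀ hne ?_
  linear_combination invSub q * invAdd q * (hB - h.qRacahC_mul hi hid + hnum)

theorem three_term_relation (h : QRacahAdmissible d a b c q) {i : ℕ} (hi : i ≤ d) :
    qRacahC d a b c q i * (qRacahEigenvalue d q b (i - 1) - qRacahEigenvalue d q b i) -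
        qRacahB d a b c q i * (qRacahEigenvalue d q b i - qRacahEigenvalue d q b (i + 1)) =
      (qRacahEigenvalue d q a 1 - qRacahEigenvalue d q a 0) *
        (qRacahEigenvalue d q b i - qRacahDualDiag d a b c q) := by
  rcases i.eq_zero_or_pos with rfl | hi₀
  · simpa [qRacahC] using h.three_term_relation_zero
  rcases hi.eq_or_lt with rfl | hid
  · simpa [qRacahB, hi₀.ne'] using h.three_term_relation_self
  · exact h.three_term_relation_of_pos_of_lt hi₀ hid

theorem thm2Conds (h : QRacahAdmissible d a b c q) :
    Thm2Conds d (qRacahEigenvalue d q a) (qRacahEigenvalue d q b)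
      (fun i => qRacahEigenvalue d q a 0 - qRacahB d a b c q i - qRacahC d a b c q i)
      (qRacahB d a b c q) (qRacahC d a b c q) (q ^ (2 : ℤ) + q ^ (-2 : ℤ)) 0 0
      (qRacahDualDiag d a b c q)
      (invSub (q ^ 2) * (invSub (q ^ ((d : ℤ) + 1)) * invAdd c - invSub a * invAdd b)) := by
  have hd : d ≠ 0 := Nat.one_le_iff_ne_zero.1 h.one_le
  refine ⟨fun i j hi hid hj hjd hij => ?_,
    fun i hi hid => h.qRacahEigenvalue_ne h.b_ne_zero h.b_sq_ne le_rfl (by omega) hid,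
    fun i _ _ => (qRacahEigenvalue_recurrence h.q_ne_zero b i).symm,
    fun i hi hid => mul_ne_zero (h.qRacahB_ne_zero (by omega)) (h.qRacahC_ne_zero hi hid),
    by simp [qRacahB, hd], by simp [qRacahC], fun i _ => by ring,
    fun i hid => h.three_term_relation hid, fun i hi hid => h.four_term_relation hi hid,
    (qRacahEigenvalue_recurrence h.q_ne_zero a 0).symm,
    fun i _ _ => qRacahEigenvalue_recurrence h.q_ne_zero a i⟩
  rcases hij.lt_or_gt with hlt | hlt
  · exact (h.qRacahEigenvalue_ne h.a_ne_zero h.a_sq_ne hi hlt hjd).symm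
  · exact h.qRacahEigenvalue_ne h.a_ne_zero h.a_sq_ne hj hlt hid

end QRacahAdmissible

end QRacah

/-- Proposition 5.3 of the paper (q-Racah type). Under the stated nonvanishing
hypotheses on `a, b, c, q`, the q-Racah data satisfy the conditions of the second
main theorem with `β = q² + q⁻²`, `γ = γ* = 0`, `θ_{-1} = aq^{-d-2} + a⁻¹q^{d+2}`,
`θ*_{-1} = bq^{-d-2} + b⁻¹q^{d+2}`, `θ*_{d+1} = bq^{d+2} + b⁻¹q^{-d-2}`, and the stated
`a*_0`; consequently the corresponding tridiagonal/diagonal pair is a Leonard pair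
on `𝔽^{d+1}`, with the tridiagonal member multiplicity-free with eigenvalues
`θ 0, …, θ d`. -/
theorem qRacah_type {F : Type*} [Field F] (d : ℕ) (hd : 1 ≤ d)
    (a b c q : F) (ha : a ≠ 0) (hb : b ≠ 0) (hc : c ≠ 0) (hq : q ≠ 0)
    (hq1 : ∀ i : ℤ, 1 ≤ i → i ≤ d → q ^ (2 * i) ≠ 1)
    (ha2 : ∀ i : ℤ, 1 - (d : ℤ) ≤ i → i ≤ (d : ℤ) - 1 → a ^ 2 ≠ q ^ (2 * i))
    (hb2 : ∀ i : ℤ, 1 - (d : ℤ) ≤ i → i ≤ (d : ℤ) - 1 → b ^ 2 ≠ q ^ (2 * i))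
    (habc : ∀ i : ℤ, 1 ≤ i → i ≤ d →
      a * b * c ≠ q ^ ((d : ℤ) + 1 - 2 * i) ∧ a⁻¹ * b * c ≠ q ^ ((d : ℤ) + 1 - 2 * i) ∧
      a * b⁻¹ * c ≠ q ^ ((d : ℤ) + 1 - 2 * i) ∧ a * b * c⁻¹ ≠ q ^ ((d : ℤ) + 1 - 2 * i)) :
    let θ : ℤ → F := fun i => a * q ^ (2 * i - (d : ℤ)) + a⁻¹ * q ^ ((d : ℤ) - 2 * i)
    let θs : ℤ → F := fun i => b * q ^ (2 * i - (d : ℤ)) + b⁻¹ * q ^ ((d : ℤ) - 2 * i)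
    let bseq : ℕ → F := fun i =>
      if i = 0 then
        (q ^ (d : ℤ) - q ^ (-(d : ℤ))) * (c * q - a⁻¹ * b⁻¹ * q ^ (d : ℤ)) *
          (q⁻¹ - a * b * c⁻¹ * q ^ (-(d : ℤ))) /
          (b * q ^ (1 - (d : ℤ)) - b⁻¹ * q ^ ((d : ℤ) - 1))
      else if i = d then 0
      else
        (q ^ ((d : ℤ) - (i : ℤ)) - q ^ ((i : ℤ) - (d : ℤ))) *
          (b * q ^ ((i : ℤ) - (d : ℤ)) - b⁻¹ * q ^ ((d : ℤ) - (i : ℤ))) *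
          (c * q ^ ((i : ℤ) + 1) - a⁻¹ * b⁻¹ * q ^ ((d : ℤ) - (i : ℤ))) *
          (q ^ (-(i : ℤ) - 1) - a * b * c⁻¹ * q ^ ((i : ℤ) - (d : ℤ))) /
          ((b * q ^ (2 * (i : ℤ) - (d : ℤ)) - b⁻¹ * q ^ ((d : ℤ) - 2 * (i : ℤ))) *
            (b * q ^ (2 * (i : ℤ) - (d : ℤ) + 1) - b⁻¹ * q ^ ((d : ℤ) - 2 * (i : ℤ) - 1)))
    let cseq : ℕ → F := fun i =>
      if i = 0 then 0
      else if i = d then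
        (q ^ (d : ℤ) - q ^ (-(d : ℤ))) * (a⁻¹ * q⁻¹ - b⁻¹ * c⁻¹ * q ^ (-(d : ℤ))) *
          (b * q ^ (d : ℤ) - a * c * q) /
          (b * q ^ ((d : ℤ) - 1) - b⁻¹ * q ^ (1 - (d : ℤ)))
      else
        (q ^ (i : ℤ) - q ^ (-(i : ℤ))) * (b * q ^ (i : ℤ) - b⁻¹ * q ^ (-(i : ℤ))) *
          (a⁻¹ * q ^ ((i : ℤ) - (d : ℤ) - 1) - b⁻¹ * c⁻¹ * q ^ (-(i : ℤ))) *
          (b * q ^ (i : ℤ) - a * c * q ^ ((d : ℤ) - (i : ℤ) + 1)) /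
          ((b * q ^ (2 * (i : ℤ) - (d : ℤ) - 1) - b⁻¹ * q ^ ((d : ℤ) - 2 * (i : ℤ) + 1)) *
            (b * q ^ (2 * (i : ℤ) - (d : ℤ)) - b⁻¹ * q ^ ((d : ℤ) - 2 * (i : ℤ))))
    let aseq : ℕ → F := fun i => θ 0 - bseq i - cseq i
    let β : F := q ^ (2 : ℤ) + q ^ (-2 : ℤ)
    let astar0 : F :=
      ((b + b⁻¹) * (a * q - a⁻¹ * q⁻¹) - (c + c⁻¹) * (q ^ (d : ℤ) - q ^ (-(d : ℤ)))) /
        (a * q ^ (1 - (d : ℤ)) - a⁻¹ * q ^ ((d : ℤ) - 1))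
    (∃ Ω : F, Thm2Conds d θ θs aseq bseq cseq β 0 0 astar0 Ω) ∧
    θ (-1) = a * q ^ (-(d : ℤ) - 2) + a⁻¹ * q ^ ((d : ℤ) + 2) ∧
    θs (-1) = b * q ^ (-(d : ℤ) - 2) + b⁻¹ * q ^ ((d : ℤ) + 2) ∧
    θs ((d : ℤ) + 1) = b * q ^ ((d : ℤ) + 2) + b⁻¹ * q ^ (-(d : ℤ) - 2) ∧
    IsIrredTridiag (triMat d aseq bseq cseq) ∧
    IsLeonardPair d (Matrix.toLin' (triMat d aseq bseq cseq))
      (Matrix.toLin' (Matrix.diagonal fun i : Fin (d + 1) => θs ((i : ℕ) : ℤ))) ∧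
    ∃ E : Fin (d + 1) → Module.End F (Fin (d + 1) → F),
      IdempSysOf d (Matrix.toLin' (triMat d aseq bseq cseq))
        (fun i : Fin (d + 1) => θ ((i : ℕ) : ℤ)) E := by
  intro θ θs bseq cseq aseq β astar0
  have h : QRacahAdmissible d a b c q := ⟨hd, ha, hb, hc, hq, hq1, ha2, hb2, habc⟩
  have hT : Thm2Conds d θ θs aseq bseq cseq β 0 0 astar0 _ := h.thm2Conds
  refine ⟨⟨_, hT⟩, ?_, ?_, ?_, hT.isIrredTridiag, hT.isLeonardPair, hT.exists_idempSysOf⟩ <;>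
    · simp only [θ, θs]
      ring_nf

end LeonardPaper
end

section
/- Let 𝔽 be a field of characteristic zero and set d = 5. Define θ*_0 = 3, θ*_1 = 93/35, θ*_2 = 69/35, θ*_3 = 33/35, θ*_4 = −3/7, θ*_5 = −15/7; b_0 = 3, b_1 = 64/35, b_2 = 243/175, b_3 = 48/49, b_4 = 11/21; c_1 = 1, c_2 = 192/175, c_3 = 243/245, c_4 = 16/21, c_5 = 3/7; a_0 = 0, a_1 = 6/35, a_2 = 18/35, a_3 = 36/35, a_4 = 12/7, a_5 = 18/7. Then conditions (i)–(viii) of the second main theorem are satisfied with θ_i = θ*_i (0 ≤ i ≤ 5), β = 2, γ = γ* = −12/35, θ_{−1} = θ*_{−1} = 3, θ*_6 = −21/5, and a*_0 = 0; consequently the 6×6 irreducible tridiagonal matrix A over 𝔽 with diagonal entries a_0,…,a_5, superdiagonal entries b_0,…,b_4, and subdiagonal entries c_1,…,c_5, together with A* = diag(θ*_0,…,θ*_5), form a Leonard pair on 𝔽^{6}, with A multiplicity-free with eigenvalues θ*_0,…,θ*_5. -/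
/-!
The data are the case `d = 5` of a self-dual family of Racah type, whose intersection numbers are
rational functions of the index. Let `U` be the matrix of values `u_j(i)` of the Racah functions
`₄F₃(-i, i + 1, -j, j + 1; 1, d + 2, -d; 1)`. In the Newton basis with nodes `k (k + 1)` the
expansion of `u_j(i)` is symmetric in `i` and `j`, and applying the three-term operator of `A` to a
truncation of it telescopes, with a remainder that vanishes for `j ≤ d`. Hence `A U = U Θ` with `Θ`
diagonal. The weights `K = diag(2 i + 1)` satisfy `Aᵀ K = K A`; transposing the first relation, the
symmetry of `U` gives `Θ (U K) = (U K) A` beside `A (U K) = (U K) Θ`. The columns of `U K` are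
nonzero because their first entries are `2 j + 1`, so they are eigenvectors for distinct
eigenvalues and `U K` is the transition matrix between the two bases of a Leonard pair.
-/

namespace LeonardPaper

variable {F : Type*} [Field F] {V : Type*} [AddCommGroup V] [Module F V]

theorem natCast_ne_zero_of_factorial_ne_zero {R : Type*} [Semiring R] {m n : ℕ}
    (hn : (n.factorial : R) ≠ 0) (hm : 0 < m) (hmn : m ≤ n) : (m : R) ≠ 0 := fun h ↦
  hn (zero_dvd_iff.mp (h ▸ Nat.cast_dvd_cast (Nat.dvd_factorial hm hmn)))

section ColumnBasis

variable {n R : Type*} [Fintype n] [DecidableEq n] [CommRing R]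

/-- The basis of `n → R` formed by the columns of an invertible matrix. -/
noncomputable def colBasis {P : Matrix n n R} (hP : IsUnit P) : Module.Basis n R (n → R) :=
  (Pi.basisFun R n).map (P.toLinearEquiv' hP.invertible)

theorem colBasis_apply {P : Matrix n n R} (hP : IsUnit P) (j : n) :
    colBasis hP j = P.col j := by
  simp only [colBasis, Module.Basis.map_apply, Pi.basisFun_apply]
  exact Matrix.mulVec_single_one P j

theorem basisFun_toMatrix_colBasis {P : Matrix n n R} (hP : IsUnit P) :
    (Pi.basisFun R n).toMatrix (colBasis hP) = P := by
  ext i j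
  simp [Module.Basis.toMatrix_apply, colBasis_apply]

theorem toMatrix_colBasis_toLin' {M N P : Matrix n n R} (hP : IsUnit P) (h : M * P = P * N) :
    LinearMap.toMatrix (colBasis hP) (colBasis hP) M.toLin' = N := by
  have hchange : P * LinearMap.toMatrix (colBasis hP) (colBasis hP) M.toLin' = M * P := by
    simpa only [basisFun_toMatrix_colBasis, ← Matrix.toLin_eq_toLin', LinearMap.toMatrix_toLin]
      using (basis_toMatrix_mul_linearMap_toMatrix (colBasis hP) (Pi.basisFun R n) (colBasis hP)
        M.toLin').trans (linearMap_toMatrix_mul_basis_toMatrix (colBasis hP) (Pi.basisFun R n)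
        (Pi.basisFun R n) M.toLin').symm
  exact hP.mul_left_cancel (hchange.trans h)

theorem toLin'_col_of_mul_eq_mul_diagonal {A P : Matrix n n R} {t : n → R}
    (hAP : A * P = P * Matrix.diagonal t) (j : n) : A.toLin' (P.col j) = t j • P.col j := by
  ext i
  calc (A * P) i j = P i j * t j := by rw [hAP, Matrix.mul_diagonal]
    _ = t j * P i j := mul_comm _ _

theorem isUnit_of_mul_eq_mul_diagonal {A P : Matrix n n F} {t : n → F}
    (ht : Function.Injective t) (hP : ∀ j, P.col j ≠ 0)
    (hAP : A * P = P * Matrix.diagonal t) : IsUnit P :=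
  Matrix.linearIndependent_cols_iff_isUnit.mp <|
    Module.End.eigenvectors_linearIndependent' A.toLin' t ht P.col fun j ↦
      Module.End.hasEigenvector_iff.mpr
        ⟨Module.End.mem_eigenspace_iff.mpr (toLin'_col_of_mul_eq_mul_diagonal hAP j), hP j⟩

end ColumnBasis

section LeonardPairs

variable {d : ℕ}

theorem exists_idempSysOf_of_apply_eq_smul (bas : Module.Basis (Fin (d + 1)) F V)
    {A : Module.End F V} {t : Fin (d + 1) → F} (ht : Function.Injective t)
    (hA : ∀ i, A (bas i) = t i • bas i) :
    ∃ E : Fin (d + 1) → Module.End F V, IdempSysOf d A t E := by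
  refine ⟨fun i ↦ (bas.coord i).smulRight (bas i), ⟨fun i j ↦ bas.ext fun k ↦ ?_, fun i ↦ ?_⟩,
    LinearMap.ext fun x ↦ ?_, ht, fun i ↦ LinearMap.ext fun x ↦ ?_⟩
  · obtain rfl | hij := eq_or_ne i j
    · simp
    · obtain rfl | hkj := eq_or_ne k j <;> simp [*]
  · have hcoord : bas.coord i ≠ 0 := fun h ↦ by simpa using LinearMap.congr_fun h (bas i)
    rw [LinearMap.range_smulRight_apply hcoord, finrank_span_singleton (bas.ne_zero i)]
  · simp [LinearMap.sum_apply, bas.sum_repr]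
  · simp [hA, smul_comm (t i)]

theorem isLeonardPair_toLin'_of_mul_eq_mul {A D P : Matrix (Fin (d + 1)) (Fin (d + 1)) F}
    (hP : IsUnit P) (hA : IsIrredTridiag A) (hD : D.IsDiag) (hAP : A * P = P * D)
    (hDP : D * P = P * A) : IsLeonardPair d A.toLin' D.toLin' := by
  refine ⟨⟨Pi.basisFun F _, ?_, ?_⟩, ⟨colBasis hP, ?_, ?_⟩⟩
  · rwa [← Matrix.toLin_eq_toLin', LinearMap.toMatrix_toLin]
  · rwa [← Matrix.toLin_eq_toLin', LinearMap.toMatrix_toLin]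
  · rwa [toMatrix_colBasis_toLin' hP hDP]
  · rwa [toMatrix_colBasis_toLin' hP hAP]

theorem isIrredTridiag_triMat {a b c : ℕ → F} (h : ∀ i, 1 ≤ i → i ≤ d → b (i - 1) * c i ≠ 0) :
    IsIrredTridiag (triMat d a b c) := by
  refine ⟨fun i j hij ↦ ?_, fun i j hij ↦ ?_⟩
  · simp only [triMat, Matrix.of_apply]
    split_ifs <;> first | omega | rfl
  · obtain hij | hij := hij
    · have hb := left_ne_zero_of_mul (h j (by omega) (by omega))
      simpa [triMat, ← hij] using hb
    · have hc := right_ne_zero_of_mul (h i (by omega) (by omega))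
      rw [← hij] at hc
      simpa [triMat, ← hij, show (j : ℕ) + 1 + 1 ≠ j by omega] using hc

theorem triMat_mulVec_apply {a b c : ℕ → F} (hc : c 0 = 0) (hb : b d = 0) (f : ℤ → F)
    (i : Fin (d + 1)) :
    (triMat d a b c).mulVec (fun k ↦ f (k : ℕ)) i =
      c i * f ((i : ℕ) - 1) + a i * f (i : ℕ) + b i * f ((i : ℕ) + 1) := by
  obtain ⟨i, hi⟩ := i
  have hsplit (k : ℕ) : (if i = k then a i else if i + 1 = k then b i
      else if k + 1 = i then c i else 0) * f k = (if k + 1 = i then c i * f (i - 1) else 0) +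
        (if i = k then a i * f i else 0) + (if i + 1 = k then b i * f (i + 1) else 0) := by
    split_ifs <;> first | omega | (subst_vars; simp)
  have hlower : ∑ k ∈ Finset.range (d + 1), (if k + 1 = i then c i * f (i - 1) else 0) =
      c i * f (i - 1) := by
    cases i with
    | zero => simp [hc]
    | succ m => simp [show m < d + 1 by omega]
  have hupper : ∑ k ∈ Finset.range (d + 1), (if i + 1 = k then b i * f (i + 1) else 0) =
      b i * f (i + 1) := by
    obtain rfl | hid := (Nat.lt_succ_iff.mp hi).eq_or_lt
    · simp [hb]
    · simp [hid]
  simp only [Matrix.mulVec, dotProduct, triMat, Matrix.of_apply]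
  rw [Fin.sum_univ_eq_sum_range (fun k : ℕ ↦ (if i = k then a i else if i + 1 = k then b i
      else if k + 1 = i then c i else 0) * f k) (d + 1)]
  simp only [hsplit, Finset.sum_add_distrib, hlower, hupper]
  simp [hi]

theorem triMat_transpose_mul_diagonal {a b c k : ℕ → F}
    (h : ∀ i < d, k i * b i = k (i + 1) * c (i + 1)) :
    (triMat d a b c).transpose * Matrix.diagonal (fun i : Fin (d + 1) ↦ k i) =
      Matrix.diagonal (fun i : Fin (d + 1) ↦ k i) * triMat d a b c := by
  ext ⟨i, hi⟩ ⟨j, hj⟩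
  simp only [Matrix.mul_diagonal, Matrix.diagonal_mul, Matrix.transpose_apply, triMat,
    Matrix.of_apply]
  split_ifs <;> first | omega | (subst_vars; grind)

end LeonardPairs

section RacahFunctions

variable {d : ℕ} {x : F}

/-- The Newton basis polynomial of degree `n` in the variable `x * (x + 1)`, with nodes
`k * (k + 1)` for `k < n`. -/
def racahNewton {R : Type*} [CommRing R] (n : ℕ) (x : R) : R :=
  ∏ k ∈ Finset.range n, (x - k) * (x + k + 1)

theorem racahNewton_zero {R : Type*} [CommRing R] (x : R) : racahNewton 0 x = 1 :=
  Finset.prod_range_zero _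

theorem racahNewton_succ {R : Type*} [CommRing R] (n : ℕ) (x : R) :
    racahNewton (n + 1) x = racahNewton n x * ((x - n) * (x + n + 1)) :=
  Finset.prod_range_succ _ _

theorem racahNewton_natCast_eq_zero {R : Type*} [CommRing R] {i n : ℕ} (h : i < n) :
    racahNewton n (i : R) = 0 :=
  Finset.prod_eq_zero (Finset.mem_range.mpr h) (by simp)

theorem racahNewton_succ_add_one {R : Type*} [CommRing R] (n : ℕ) (x : R) :
    racahNewton (n + 1) (x + 1) = (x + n + 1) * (x + n + 2) * racahNewton n x := by
  induction n with
  | zero => simp only [racahNewton, Finset.prod_range_succ, Finset.prod_range_zero]; push_cast; ring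
  | succ n ih => rw [racahNewton_succ, ih, racahNewton_succ]; push_cast; ring

theorem racahNewton_succ_sub_one {R : Type*} [CommRing R] (n : ℕ) (x : R) :
    racahNewton (n + 1) (x - 1) = (x - n - 1) * (x - n) * racahNewton n x := by
  induction n with
  | zero => simp only [racahNewton, Finset.prod_range_succ, Finset.prod_range_zero]; push_cast; ring
  | succ n ih => rw [racahNewton_succ, ih, racahNewton_succ]; push_cast; ring

/-- The common eigenvalue and dual eigenvalue sequence of the self-dual Racah family, as a
function of the index, normalized by `θ_0 = 3`. -/
def racahEigenvalue (d : ℕ) (x : F) : F := 3 - 6 * x * (x + 1) / (d * (d + 2))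

/-- The diagonal intersection numbers `a_i` of the self-dual Racah family. -/
def racahA (d : ℕ) (x : F) : F := 3 * x * (x + 1) / (d * (d + 2))

/-- The superdiagonal intersection numbers `b_i` of the self-dual Racah family. -/
def racahB (d : ℕ) (x : F) : F :=
  3 * (x + 1) * ((d + 1) ^ 2 - (x + 1) ^ 2) / (d * (d + 2) * (2 * x + 1))

/-- The subdiagonal intersection numbers `c_i` of the self-dual Racah family. -/
def racahC (d : ℕ) (x : F) : F :=
  3 * x * ((d + 1) ^ 2 - x ^ 2) / (d * (d + 2) * (2 * x + 1))

theorem racahEigenvalue_sub (d : ℕ) (x y : F) :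
    racahEigenvalue d x - racahEigenvalue d y = 6 * ((y - x) * (x + y + 1)) / (d * (d + 2)) := by
  simp only [racahEigenvalue]
  ring

theorem racahEigenvalue_sub_two_mul_add (d : ℕ) (x : F) :
    racahEigenvalue d (x - 1) - 2 * racahEigenvalue d x + racahEigenvalue d (x + 1) =
      -12 / (d * (d + 2)) := by
  simp only [racahEigenvalue]
  ring

theorem racahC_add_racahA_add_racahB (hd : (d : F) ≠ 0) (hd2 : (d + 2 : F) ≠ 0)
    (hx : 2 * x + 1 ≠ 0) : racahC d x + racahA d x + racahB d x = 3 := by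
  simp only [racahA, racahB, racahC]
  -- `field_simp` normalizes denominators to `x * 2 + 1`
  rw [mul_comm] at hx
  field_simp
  ring

theorem racahC_mul_sub_racahB_mul (hd : (d : F) ≠ 0) (hd2 : (d + 2 : F) ≠ 0)
    (hx : 2 * x + 1 ≠ 0) :
    racahC d x * (racahEigenvalue d (x - 1) - racahEigenvalue d x) -
        racahB d x * (racahEigenvalue d x - racahEigenvalue d (x + 1)) =
      (racahEigenvalue d 1 - racahEigenvalue d 0) * racahEigenvalue d x := by
  simp only [racahEigenvalue, racahB, racahC]
  rw [mul_comm] at hx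
  field_simp
  ring

theorem two_mul_sub_one_mul_racahB (hx : 2 * x + 1 ≠ 0) (hx' : 2 * x - 1 ≠ 0) :
    (2 * x - 1) * racahB d (x - 1) = (2 * x + 1) * racahC d x := by
  simp only [racahB, racahC, show 2 * (x - 1) + 1 = 2 * x - 1 by ring, sub_add_cancel]
  field_simp

theorem racahC_mul_sub_racahB_mul_eq_zero (hx : 2 * x + 1 ≠ 0) (hx' : 2 * x - 1 ≠ 0) :
    racahC d x * (racahEigenvalue d (x - 1) - racahEigenvalue d (x + 1)) -
        racahB d (x - 1) * (racahEigenvalue d (x - 2) - racahEigenvalue d x) = 0 := by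
  rw [racahEigenvalue_sub, racahEigenvalue_sub]
  linear_combination (-12 / (d * (d + 2))) * two_mul_sub_one_mul_racahB (d := d) hx hx'

theorem racahNewton_difference_eq (n : ℕ) (hd : (d : F) ≠ 0) (hd2 : (d + 2 : F) ≠ 0)
    (hx : 2 * x + 1 ≠ 0) :
    racahC d x * racahNewton (n + 1) (x - 1) + racahA d x * racahNewton (n + 1) x +
        racahB d x * racahNewton (n + 1) (x + 1) =
      racahEigenvalue d (n + 1 : F) * racahNewton (n + 1) x +
        6 * (n + 1) ^ 2 * ((d + 1) ^ 2 - (n + 1) ^ 2) / (d * (d + 2)) * racahNewton n x := by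
  rw [racahNewton_succ_sub_one, racahNewton_succ_add_one, racahNewton_succ]
  simp only [racahEigenvalue, racahA, racahB, racahC]
  rw [mul_comm] at hx
  field_simp
  ring

/-- The coefficients of the Racah functions in the Newton basis. -/
def racahCoeff (d n : ℕ) : F :=
  ∏ k ∈ Finset.range n, -(((k : F) + 1) ^ 2 * ((d + 1) ^ 2 - (k + 1) ^ 2))⁻¹

/-- The degree `N` truncation of the self-dual Racah function
`₄F₃(-x, x + 1, -y, y + 1; 1, d + 2, -d; 1)`. -/
def racahSum (d N : ℕ) (x y : F) : F :=
  ∑ n ∈ Finset.range (N + 1), racahCoeff d n * racahNewton n x * racahNewton n y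

theorem succ_sq_sub_succ_sq_ne_zero {n : ℕ} (hF : ((2 * d + 1).factorial : F) ≠ 0) (hn : n < d) :
    ((d : F) + 1) ^ 2 - (n + 1) ^ 2 ≠ 0 := by
  obtain ⟨m, rfl⟩ := Nat.exists_eq_add_of_lt hn
  have hsub : ((m + 1 : ℕ) : F) ≠ 0 :=
    natCast_ne_zero_of_factorial_ne_zero hF (by omega) (by omega)
  have hadd : ((2 * n + m + 3 : ℕ) : F) ≠ 0 :=
    natCast_ne_zero_of_factorial_ne_zero hF (by omega) (by omega)
  convert mul_ne_zero hsub hadd using 1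
  push_cast
  ring

theorem racahCoeff_succ_mul {n : ℕ} (hF : ((2 * d + 1).factorial : F) ≠ 0) (hn : n < d) :
    racahCoeff d (n + 1) * (((n : F) + 1) ^ 2 * ((d + 1) ^ 2 - (n + 1) ^ 2)) =
      -racahCoeff d n := by
  have hn1 : (n + 1 : F) ≠ 0 := by
    exact_mod_cast natCast_ne_zero_of_factorial_ne_zero hF n.succ_pos (by omega)
  have hne := mul_ne_zero (pow_ne_zero 2 hn1) (succ_sq_sub_succ_sq_ne_zero hF hn)
  rw [racahCoeff, Finset.prod_range_succ, ← racahCoeff, mul_neg, neg_mul,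
    inv_mul_cancel_right₀ hne]

theorem racahSum_comm (d N : ℕ) (x y : F) : racahSum d N x y = racahSum d N y x :=
  Finset.sum_congr rfl fun _ _ ↦ mul_right_comm _ _ _

theorem racahSum_zero_left (d N : ℕ) (y : F) : racahSum d N 0 y = 1 := by
  rw [racahSum, Finset.sum_range_succ']
  have hvanish (n : ℕ) : racahNewton (n + 1) (0 : F) = 0 := by
    exact_mod_cast racahNewton_natCast_eq_zero (R := F) n.succ_pos
  simp [hvanish, racahNewton_zero, racahCoeff]

theorem racahSum_difference_eq {N : ℕ} (hd : (d : F) ≠ 0) (hd2 : (d + 2 : F) ≠ 0)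
    (hF : ((2 * d + 1).factorial : F) ≠ 0) (hx : 2 * x + 1 ≠ 0) (hN : N ≤ d) (y : F) :
    racahC d x * racahSum d N (x - 1) y + racahA d x * racahSum d N x y +
        racahB d x * racahSum d N (x + 1) y =
      racahEigenvalue d y * racahSum d N x y +
        6 / (d * (d + 2)) * (racahCoeff d N * racahNewton N x * racahNewton (N + 1) y) := by
  induction N with
  | zero =>
    have hsum := racahC_add_racahA_add_racahB hd hd2 hx
    simp only [racahSum, racahCoeff, racahNewton, racahEigenvalue, zero_add,
      Finset.sum_range_one, Finset.prod_range_zero, Finset.prod_range_one, Nat.cast_zero]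
    linear_combination hsum
  | succ N ih =>
    have hsplit (z : F) : racahSum d (N + 1) z y = racahSum d N z y +
        racahCoeff d (N + 1) * racahNewton (N + 1) z * racahNewton (N + 1) y :=
      Finset.sum_range_succ _ _
    have hy := racahEigenvalue_sub d (N + 1 : F) y
    have hw := racahCoeff_succ_mul hF (Nat.lt_of_succ_le hN)
    have hstep := racahNewton_difference_eq N hd hd2 hx
    rw [hsplit, hsplit, hsplit, racahNewton_succ (N + 1) y]
    push_cast
    linear_combination ih (by omega) +
      racahCoeff d (N + 1) * racahNewton (N + 1) y * hstep +
      racahCoeff d (N + 1) * racahNewton (N + 1) x * racahNewton (N + 1) y * hy +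
      6 / (d * (d + 2)) * racahNewton N x * racahNewton (N + 1) y * hw

end RacahFunctions

section RacahLeonardPair

variable {d : ℕ} {θ : ℤ → F} {a b c : ℕ → F}

/-- The sequences agree, on the index ranges occurring in `Thm2Conds`, with the eigenvalues and
intersection numbers of the self-dual Racah family of diameter `d`. -/
structure IsRacahData (d : ℕ) (θ : ℤ → F) (a b c : ℕ → F) : Prop where
  eigenvalue_eq : ∀ i : ℤ, -1 ≤ i → i ≤ d + 1 → θ i = racahEigenvalue d (i : F)
  diag_eq : ∀ i ≤ d, a i = racahA d (i : F)
  superdiag_eq : ∀ i ≤ d, b i = racahB d (i : F)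
  subdiag_eq : ∀ i ≤ d, c i = racahC d (i : F)

theorem two_mul_add_one_ne_zero {i : ℕ} (hF : ((2 * d + 1).factorial : F) ≠ 0) (hi : i ≤ d) :
    2 * (i : F) + 1 ≠ 0 := by
  exact_mod_cast natCast_ne_zero_of_factorial_ne_zero hF (m := 2 * i + 1) (by omega) (by omega)

theorem natCast_add_two_ne_zero (hd : 0 < d) (hF : ((2 * d + 1).factorial : F) ≠ 0) :
    (d + 2 : F) ≠ 0 := by
  exact_mod_cast natCast_ne_zero_of_factorial_ne_zero hF (m := d + 2) (by omega) (by omega)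

theorem racahEigenvalue_ne_of_lt (hd : 0 < d) (hF : ((2 * d + 1).factorial : F) ≠ 0) {i j : ℕ}
    (hij : i < j) (hj : j ≤ d) : racahEigenvalue d (i : F) ≠ racahEigenvalue d (j : F) := by
  have hne {m : ℕ} (hm : 0 < m) (hmd : m ≤ 2 * d + 1) : (m : F) ≠ 0 :=
    natCast_ne_zero_of_factorial_ne_zero hF hm hmd
  have hsix : (6 : F) ≠ 0 := by
    convert mul_ne_zero (hne (m := 2) (by omega) (by omega)) (hne (m := 3) (by omega) (by omega))
    norm_num
  obtain ⟨m, rfl⟩ := Nat.exists_eq_add_of_lt hij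
  have hsub : ((i + m + 1 : ℕ) - i : F) ≠ 0 := by
    convert hne (m := m + 1) (by omega) (by omega) using 1
    push_cast
    ring
  have hadd : (i + (i + m + 1 : ℕ) + 1 : F) ≠ 0 := by
    exact_mod_cast hne (m := i + (i + m + 1) + 1) (by omega) (by omega)
  rw [← sub_ne_zero, racahEigenvalue_sub]
  exact div_ne_zero (mul_ne_zero hsix (mul_ne_zero hsub hadd))
    (mul_ne_zero (hne hd (by omega)) (natCast_add_two_ne_zero hd hF))

theorem racahB_ne_zero (hd : 0 < d) (hF : ((2 * d + 1).factorial : F) ≠ 0) {i : ℕ} (hi : i < d) :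
    racahB d (i : F) ≠ 0 := by
  have hne {m : ℕ} (hm : 0 < m) (hmd : m ≤ 2 * d + 1) : (m : F) ≠ 0 :=
    natCast_ne_zero_of_factorial_ne_zero hF hm hmd
  have hthree : (3 : F) ≠ 0 := by exact_mod_cast hne (m := 3) (by omega) (by omega)
  have hsucc : (i + 1 : F) ≠ 0 := by exact_mod_cast hne i.succ_pos (by omega)
  exact div_ne_zero (mul_ne_zero (mul_ne_zero hthree hsucc) (succ_sq_sub_succ_sq_ne_zero hF hi))
    (mul_ne_zero (mul_ne_zero (hne hd (by omega)) (natCast_add_two_ne_zero hd hF))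
      (two_mul_add_one_ne_zero hF hi.le))

theorem two_mul_add_one_mul_racahB (hF : ((2 * d + 1).factorial : F) ≠ 0) {i : ℕ} (hi : i < d) :
    (2 * i + 1) * racahB d (i : F) = (2 * (i + 1 : ℕ) + 1) * racahC d ((i + 1 : ℕ) : F) := by
  have hi0 := two_mul_add_one_ne_zero hF hi.le
  have hi1 := two_mul_add_one_ne_zero hF (Nat.succ_le_of_lt hi)
  have h := two_mul_sub_one_mul_racahB (d := d) hi1 (by push_cast; convert hi0 using 1; ring)
  rw [← h]
  push_cast
  ring_nf

theorem racahC_succ_ne_zero (hd : 0 < d) (hF : ((2 * d + 1).factorial : F) ≠ 0) {i : ℕ}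
    (hi : i < d) : racahC d ((i + 1 : ℕ) : F) ≠ 0 :=
  right_ne_zero_of_mul <| two_mul_add_one_mul_racahB hF hi ▸
    mul_ne_zero (two_mul_add_one_ne_zero hF hi.le) (racahB_ne_zero hd hF hi)

namespace IsRacahData

theorem eigenvalue_natCast_eq (h : IsRacahData d θ a b c) {i : ℕ} (hi : i ≤ d) :
    θ i = racahEigenvalue d (i : F) := by
  exact_mod_cast h.eigenvalue_eq i (by omega) (by omega)

theorem eigenvalue_injOn (h : IsRacahData d θ a b c) (hd : 0 < d)
    (hF : ((2 * d + 1).factorial : F) ≠ 0) {i j : ℕ} (hi : i ≤ d) (hj : j ≤ d)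
    (hij : θ i = θ j) : i = j := by
  rw [h.eigenvalue_natCast_eq hi, h.eigenvalue_natCast_eq hj] at hij
  obtain hlt | heq | hlt := lt_trichotomy i j
  · exact absurd hij (racahEigenvalue_ne_of_lt hd hF hlt hj)
  · exact heq
  · exact absurd hij.symm (racahEigenvalue_ne_of_lt hd hF hlt hi)

theorem superdiag_last (h : IsRacahData d θ a b c) : b d = 0 := by
  simp [h.superdiag_eq, racahB]

theorem subdiag_zero (h : IsRacahData d θ a b c) : c 0 = 0 := by
  simp [h.subdiag_eq, racahC]

theorem superdiag_mul_subdiag_ne_zero (h : IsRacahData d θ a b c) (hd : 0 < d)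
    (hF : ((2 * d + 1).factorial : F) ≠ 0) (i : ℕ) (hi : 1 ≤ i) (hid : i ≤ d) :
    b (i - 1) * c i ≠ 0 := by
  obtain ⟨i, rfl⟩ := Nat.exists_eq_add_of_le' hi
  rw [Nat.add_sub_cancel, h.superdiag_eq i (by omega), h.subdiag_eq _ hid]
  exact mul_ne_zero (racahB_ne_zero hd hF hid) (racahC_succ_ne_zero hd hF hid)

theorem eigenvalue_zero (h : IsRacahData d θ a b c) : θ 0 = 3 := by
  rw [h.eigenvalue_eq 0 (by omega) (by omega)]
  simp [racahEigenvalue]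

theorem eigenvalue_neg_one (h : IsRacahData d θ a b c) : θ (-1) = 3 := by
  rw [h.eigenvalue_eq (-1) le_rfl (by omega)]
  simp [racahEigenvalue]

theorem eigenvalue_sub_two_mul_add (h : IsRacahData d θ a b c) {i : ℤ} (hi : 0 ≤ i)
    (hid : i ≤ d) : θ (i - 1) - 2 * θ i + θ (i + 1) = -12 / (d * (d + 2)) := by
  rw [h.eigenvalue_eq (i - 1) (by omega) (by omega), h.eigenvalue_eq i (by omega) (by omega),
    h.eigenvalue_eq (i + 1) (by omega) (by omega)]
  push_cast
  exact racahEigenvalue_sub_two_mul_add d _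

theorem subdiag_mul_sub_superdiag_mul (h : IsRacahData d θ a b c) (hd : 0 < d)
    (hF : ((2 * d + 1).factorial : F) ≠ 0) {i : ℕ} (hi : i ≤ d) :
    c i * (θ ((i : ℤ) - 1) - θ i) - b i * (θ i - θ ((i : ℤ) + 1)) = (θ 1 - θ 0) * θ i := by
  rw [h.superdiag_eq i hi, h.subdiag_eq i hi, h.eigenvalue_eq (i - 1) (by omega) (by omega),
    h.eigenvalue_eq i (by omega) (by omega), h.eigenvalue_eq (i + 1) (by omega) (by omega),
    h.eigenvalue_eq 0 (by omega) (by omega), h.eigenvalue_eq 1 (by omega) (by omega)]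
  push_cast
  exact racahC_mul_sub_racahB_mul (natCast_ne_zero_of_factorial_ne_zero hF hd (by omega))
    (natCast_add_two_ne_zero hd hF) (two_mul_add_one_ne_zero hF hi)

theorem subdiag_succ_mul_sub_superdiag_mul_eq_zero (h : IsRacahData d θ a b c)
    (hF : ((2 * d + 1).factorial : F) ≠ 0) {i : ℕ} (hi : i < d) :
    c (i + 1) * (θ i - θ ((i : ℤ) + 2)) - b i * (θ ((i : ℤ) - 1) - θ ((i : ℤ) + 1)) = 0 := by
  have hvii := racahC_mul_sub_racahB_mul_eq_zero (d := d) (two_mul_add_one_ne_zero hF hi)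
    (by push_cast; convert two_mul_add_one_ne_zero hF hi.le using 1; ring)
  rw [h.superdiag_eq i hi.le, h.subdiag_eq _ hi, h.eigenvalue_eq (i - 1) (by omega) (by omega),
    h.eigenvalue_eq i (by omega) (by omega), h.eigenvalue_eq (i + 1) (by omega) (by omega),
    h.eigenvalue_eq (i + 2) (by omega) (by omega)]
  convert hvii using 5 <;> push_cast <;> ring

theorem thm2Conds (h : IsRacahData d θ a b c) (hd : 0 < d)
    (hF : ((2 * d + 1).factorial : F) ≠ 0) :
    Thm2Conds d θ θ a b c 2 (-12 / (d * (d + 2))) (-12 / (d * (d + 2))) 0 0 := by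
  have hd0 : (d : F) ≠ 0 := natCast_ne_zero_of_factorial_ne_zero hF hd (by omega)
  have hd2 := natCast_add_two_ne_zero hd hF
  have hinj (i j : ℤ) (hi : 0 ≤ i) (hid : i ≤ d) (hj : 0 ≤ j) (hjd : j ≤ d) (hij : i ≠ j) :
      θ i ≠ θ j := by
    lift i to ℕ using hi
    lift j to ℕ using hj
    exact fun heq ↦ hij (congrArg _ (h.eigenvalue_injOn hd hF (by omega) (by omega) heq))
  refine ⟨hinj, fun i hi hid ↦ hinj i 0 (by omega) hid le_rfl (by omega) (by omega),
    fun i hi hid ↦ (h.eigenvalue_sub_two_mul_add hi hid).symm,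
    h.superdiag_mul_subdiag_ne_zero hd hF, h.superdiag_last, h.subdiag_zero, fun i hi ↦ ?_,
    fun i hi ↦ ?_, fun i hi hid ↦ ?_, (h.eigenvalue_sub_two_mul_add le_rfl (by omega)).symm,
    fun i hi hid ↦ h.eigenvalue_sub_two_mul_add (by omega) (by omega)⟩
  · rw [h.diag_eq i hi, h.superdiag_eq i hi, h.subdiag_eq i hi, h.eigenvalue_zero]
    exact racahC_add_racahA_add_racahB hd0 hd2 (two_mul_add_one_ne_zero hF hi)
  · rw [sub_zero]
    exact h.subdiag_mul_sub_superdiag_mul hd hF hi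
  · obtain ⟨i, rfl⟩ := Nat.exists_eq_add_of_le' hi
    have hvii := h.subdiag_succ_mul_sub_superdiag_mul_eq_zero hF hid
    rw [h.eigenvalue_zero, h.eigenvalue_neg_one, sub_self, zero_mul, sub_zero,
      Nat.add_sub_cancel, Nat.cast_succ, add_sub_cancel_right, add_assoc,
      show (i : ℤ) + 1 - 2 = i - 1 by ring]
    exact hvii

end IsRacahData

variable (F) in
/-- The matrix of values of the self-dual Racah functions on `{0, …, d}`. -/
def racahMatrix (d : ℕ) : Matrix (Fin (d + 1)) (Fin (d + 1)) F :=
  Matrix.of fun i j ↦ racahSum d d ((i : ℕ) : F) ((j : ℕ) : F)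

variable (F) in
/-- The diagonal matrix of the weights `2 * i + 1` for which the self-dual Racah functions are
orthogonal. -/
def racahWeightMatrix (d : ℕ) : Matrix (Fin (d + 1)) (Fin (d + 1)) F :=
  Matrix.diagonal fun i ↦ 2 * ((i : ℕ) : F) + 1

theorem racahMatrix_transpose (d : ℕ) : (racahMatrix F d).transpose = racahMatrix F d :=
  Matrix.ext fun _ _ ↦ racahSum_comm _ _ _ _

namespace IsRacahData

theorem triMat_mul_racahMatrix (h : IsRacahData d θ a b c) (hd : 0 < d)
    (hF : ((2 * d + 1).factorial : F) ≠ 0) :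
    triMat d a b c * racahMatrix F d =
      racahMatrix F d * Matrix.diagonal fun i : Fin (d + 1) ↦ θ (i : ℕ) := by
  have hd0 : (d : F) ≠ 0 := natCast_ne_zero_of_factorial_ne_zero hF hd (by omega)
  ext i j
  have hi : (i : ℕ) ≤ d := Nat.le_of_lt_succ i.isLt
  have hj : (j : ℕ) ≤ d := Nat.le_of_lt_succ j.isLt
  have hdiff := racahSum_difference_eq hd0 (natCast_add_two_ne_zero hd hF) hF
    (two_mul_add_one_ne_zero hF hi) le_rfl ((j : ℕ) : F)
  rw [racahNewton_natCast_eq_zero (Nat.lt_succ_of_le hj), mul_zero, mul_zero, add_zero] at hdiff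
  have hmulVec := triMat_mulVec_apply (a := a) h.subdiag_zero h.superdiag_last
    (fun k ↦ racahSum d d (k : F) ((j : ℕ) : F)) i
  rw [Matrix.mul_diagonal, h.eigenvalue_natCast_eq hj]
  calc (triMat d a b c * racahMatrix F d) i j
      = racahC d ((i : ℕ) : F) * racahSum d d ((i : ℕ) - 1 : F) ((j : ℕ) : F) +
          racahA d ((i : ℕ) : F) * racahSum d d ((i : ℕ) : F) ((j : ℕ) : F) +
          racahB d ((i : ℕ) : F) * racahSum d d ((i : ℕ) + 1 : F) ((j : ℕ) : F) := by
        rw [← h.diag_eq i hi, ← h.superdiag_eq i hi, ← h.subdiag_eq i hi]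
        change (triMat d a b c).mulVec (fun k ↦ racahSum d d ((k : ℕ) : F) ((j : ℕ) : F)) i = _
        simpa using hmulVec
    _ = racahMatrix F d i j * racahEigenvalue d ((j : ℕ) : F) := hdiff.trans (mul_comm _ _)

theorem triMat_transpose_mul_racahWeightMatrix (h : IsRacahData d θ a b c)
    (hF : ((2 * d + 1).factorial : F) ≠ 0) :
    (triMat d a b c).transpose * racahWeightMatrix F d =
      racahWeightMatrix F d * triMat d a b c :=
  triMat_transpose_mul_diagonal (k := fun i ↦ 2 * (i : F) + 1) fun i hi ↦ by
    rw [h.superdiag_eq i hi.le, h.subdiag_eq _ hi]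
    exact two_mul_add_one_mul_racahB hF hi

theorem diagonal_mul_racahMatrix (h : IsRacahData d θ a b c) (hd : 0 < d)
    (hF : ((2 * d + 1).factorial : F) ≠ 0) :
    (Matrix.diagonal fun i : Fin (d + 1) ↦ θ (i : ℕ)) * racahMatrix F d =
      racahMatrix F d * (triMat d a b c).transpose := by
  simpa [Matrix.transpose_mul, racahMatrix_transpose] using
    (congrArg Matrix.transpose (h.triMat_mul_racahMatrix hd hF)).symm

end IsRacahData

theorem racah_example_general (h : IsRacahData d θ a b c) (hd : 0 < d)
    (hF : ((2 * d + 1).factorial : F) ≠ 0) :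
    Thm2Conds d θ θ a b c 2 (-12 / (d * (d + 2))) (-12 / (d * (d + 2))) 0 0 ∧
    IsIrredTridiag (triMat d a b c) ∧
    IsLeonardPair d (triMat d a b c).toLin'
      (Matrix.diagonal fun i : Fin (d + 1) ↦ θ (i : ℕ)).toLin' ∧
    ∃ E : Fin (d + 1) → Module.End F (Fin (d + 1) → F),
      IdempSysOf d (triMat d a b c).toLin' (fun i : Fin (d + 1) ↦ θ (i : ℕ)) E := by
  set t : Fin (d + 1) → F := fun i ↦ θ (i : ℕ)
  have ht : Function.Injective t := fun i j hij ↦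
    Fin.ext (h.eigenvalue_injOn hd hF (by omega) (by omega) hij)
  have hirr := isIrredTridiag_triMat (a := a) (h.superdiag_mul_subdiag_ne_zero hd hF)
  have hAP : triMat d a b c * (racahMatrix F d * racahWeightMatrix F d) =
      racahMatrix F d * racahWeightMatrix F d * Matrix.diagonal t := by
    rw [← mul_assoc, h.triMat_mul_racahMatrix hd hF, mul_assoc, mul_assoc, racahWeightMatrix,
      (Matrix.commute_diagonal _ _).eq]
  have hDP : Matrix.diagonal t * (racahMatrix F d * racahWeightMatrix F d) =
      racahMatrix F d * racahWeightMatrix F d * triMat d a b c := by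
    rw [← mul_assoc, h.diagonal_mul_racahMatrix hd hF, mul_assoc,
      h.triMat_transpose_mul_racahWeightMatrix hF, mul_assoc]
  have hcol (j : Fin (d + 1)) : (racahMatrix F d * racahWeightMatrix F d).col j ≠ 0 := by
    refine fun hzero ↦ two_mul_add_one_ne_zero hF (Nat.le_of_lt_succ j.isLt) ?_
    simpa [racahMatrix, racahWeightMatrix, racahSum_zero_left] using congrFun hzero 0
  have hP := isUnit_of_mul_eq_mul_diagonal ht hcol hAP
  refine ⟨h.thm2Conds hd hF, hirr,
    isLeonardPair_toLin'_of_mul_eq_mul hP hirr (Matrix.isDiag_diagonal t) hAP hDP,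
    exists_idempSysOf_of_apply_eq_smul (colBasis hP) ht fun j ↦ ?_⟩
  simpa only [colBasis_apply] using toLin'_col_of_mul_eq_mul_diagonal hAP j

end RacahLeonardPair

/-- Proposition 5.5 of the paper (Racah type, `d = 5`). The given numerical data
satisfy the conditions of the second main theorem with `θ i = θs i`, `β = 2`,
`γ = γ* = −12/35`, `θ_{-1} = θ*_{-1} = 3`, `θ*_6 = −21/5`, `a*_0 = 0`; consequently
the corresponding `6 × 6` tridiagonal/diagonal pair is a Leonard pair on `𝔽^6`,
with the tridiagonal member multiplicity-free with eigenvalues `θs 0, …, θs 5`. -/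
theorem racah_example {F : Type*} [Field F] [CharZero F] :
    let θs : ℤ → F := fun i =>
      if i = -1 then 3 else if i = 0 then 3 else if i = 1 then 93 / 35
      else if i = 2 then 69 / 35 else if i = 3 then 33 / 35 else if i = 4 then -3 / 7
      else if i = 5 then -15 / 7 else -21 / 5
    let aseq : ℕ → F := fun i =>
      if i = 0 then 0 else if i = 1 then 6 / 35 else if i = 2 then 18 / 35
      else if i = 3 then 36 / 35 else if i = 4 then 12 / 7 else 18 / 7
    let bseq : ℕ → F := fun i =>
      if i = 0 then 3 else if i = 1 then 64 / 35 else if i = 2 then 243 / 175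
      else if i = 3 then 48 / 49 else if i = 4 then 11 / 21 else 0
    let cseq : ℕ → F := fun i =>
      if i = 1 then 1 else if i = 2 then 192 / 175 else if i = 3 then 243 / 245
      else if i = 4 then 16 / 21 else if i = 5 then 3 / 7 else 0
    (∃ Ω : F, Thm2Conds 5 θs θs aseq bseq cseq 2 (-12 / 35) (-12 / 35) 0 Ω) ∧
    θs (-1) = 3 ∧ θs 6 = -21 / 5 ∧
    IsIrredTridiag (triMat 5 aseq bseq cseq) ∧
    IsLeonardPair 5 (Matrix.toLin' (triMat 5 aseq bseq cseq))
      (Matrix.toLin' (Matrix.diagonal fun i : Fin 6 => θs ((i : ℕ) : ℤ))) ∧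
    ∃ E : Fin 6 → Module.End F (Fin 6 → F),
      IdempSysOf 5 (Matrix.toLin' (triMat 5 aseq bseq cseq))
        (fun i : Fin 6 => θs ((i : ℕ) : ℤ)) E := by
  intro θs aseq bseq cseq
  have hdata : IsRacahData 5 θs aseq bseq cseq := by
    refine ⟨fun i hi hid ↦ ?_, fun i hi ↦ ?_, fun i hi ↦ ?_, fun i hi ↦ ?_⟩
    · push_cast at hid
      interval_cases i <;> norm_num [θs, racahEigenvalue]
    · interval_cases i <;> norm_num [aseq, racahA]
    · interval_cases i <;> norm_num [bseq, racahB]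
    · interval_cases i <;> norm_num [cseq, racahC]
  obtain ⟨hconds, hrest⟩ := racah_example_general hdata (by norm_num)
    (Nat.cast_ne_zero.mpr (Nat.factorial_ne_zero _))
  have hγ : (-12 / ((5 : ℕ) * ((5 : ℕ) + 2)) : F) = -12 / 35 := by norm_num
  rw [hγ] at hconds
  exact ⟨⟨0, hconds⟩, by norm_num [θs], by norm_num [θs], hrest⟩

end LeonardPaper
end

section
/- Let 𝔽 be a field, d ≥ 0 an integer, and β, γ* ∈ 𝔽. Let θ*_{−1}, θ*_0, …, θ*_{d+1} be scalars in 𝔽 satisfying γ* = θ*_{i−1} − βθ*_i + θ*_{i+1} for 0 ≤ i ≤ d. Then the scalar p_i = θ*_{i−1}² − βθ*_{i−1}θ*_i + θ*_i² − γ*(θ*_{i−1} + θ*_i) is independent of i for 0 ≤ i ≤ d+1; in fact p_i − p_{i+1} = (θ*_{i−1} − θ*_{i+1})(θ*_{i−1} − βθ*_i + θ*_{i+1} − γ*) = 0 for 0 ≤ i ≤ d. -/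
/-- The quadratic expression in two consecutive terms `x`, `y` of a sequence that is constant along
the sequence when every three consecutive terms satisfy `x - βy + z = γ`. The paper's scalar `p i`
is its value at `θs (i - 1)` and `θs i`. -/
def recurrenceInvariant {R : Type*} [CommRing R] (β γ x y : R) : R :=
  x ^ 2 - β * x * y + y ^ 2 - γ * (x + y)

section RecurrenceInvariant

variable {R : Type*} [CommRing R] {β γ x y z : R}

theorem recurrenceInvariant_sub_recurrenceInvariant :
    recurrenceInvariant β γ x y - recurrenceInvariant β γ y z =
      (x - z) * (x - β * y + z - γ) := by
  unfold recurrenceInvariant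
  ring

theorem recurrenceInvariant_eq_of_recurrence (hrec : γ = x - β * y + z) :
    recurrenceInvariant β γ x y = recurrenceInvariant β γ y z := by
  rw [← sub_eq_zero, recurrenceInvariant_sub_recurrenceInvariant, ← hrec, sub_self, mul_zero]

end RecurrenceInvariant

theorem eq_of_mem_Icc_of_forall_eq_add_one {α β : Type*} [LinearOrder α] [Add α] [One α]
    [SuccAddOrder α] [IsSuccArchimedean α] {f : α → β} {a b i j : α}
    (hf : ∀ k ∈ Set.Ico a b, f k = f (k + 1))
    (hi : i ∈ Set.Icc a b) (hj : j ∈ Set.Icc a b) : f i = f j := by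
  have eq_succ : ∀ k ∈ Set.Ico a b, f k = f (Order.succ k) := by
    simpa only [Order.succ_eq_add_one] using hf
  have path : Relation.ReflTransGen (fun k l => f k = f l) i j :=
    reflTransGen_of_succ _ (fun k hk => eq_succ k ⟨hi.1.trans hk.1, hk.2.trans_le hj.2⟩)
      fun k hk => (eq_succ k ⟨hj.1.trans hk.1, hk.2.trans_le hi.2⟩).symm
  simpa only [Relation.reflTransGen_eq_self] using path.lift (p := Eq) f fun _ _ => id

theorem p_independent_general {R : Type*} [CommRing R] (m n : ℤ) (β γs : R) (θs : ℤ → R)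
    (hrec : ∀ i : ℤ, m ≤ i → i ≤ n → γs = θs (i - 1) - β * θs i + θs (i + 1)) :
    let p : ℤ → R := fun i => recurrenceInvariant β γs (θs (i - 1)) (θs i)
    (∀ i : ℤ, m ≤ i → i ≤ n →
      p i - p (i + 1) = (θs (i - 1) - θs (i + 1)) * (θs (i - 1) - β * θs i + θs (i + 1) - γs)
        ∧ p i - p (i + 1) = 0) ∧
    ∀ i j : ℤ, m ≤ i → i ≤ n + 1 → m ≤ j → j ≤ n + 1 → p i = p j := by
  intro p
  have p_add_one (i : ℤ) : p (i + 1) = recurrenceInvariant β γs (θs i) (θs (i + 1)) := by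
    simp only [p, add_sub_cancel_right]
  have p_eq_add_one (i : ℤ) (hm : m ≤ i) (hn : i ≤ n) : p i = p (i + 1) := by
    rw [p_add_one]
    exact recurrenceInvariant_eq_of_recurrence (hrec i hm hn)
  refine ⟨fun i hm hn => ⟨?_, sub_eq_zero.mpr (p_eq_add_one i hm hn)⟩,
    fun i j him hin hjm hjn => ?_⟩
  · rw [p_add_one]
    exact recurrenceInvariant_sub_recurrenceInvariant
  · exact eq_of_mem_Icc_of_forall_eq_add_one
      (fun k hk => p_eq_add_one k hk.1 (Int.lt_add_one_iff.mp hk.2)) ⟨him, hin⟩ ⟨hjm, hjn⟩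

/-- The claim from the proof of the first main theorem: under the three-term
recurrence, `p i := θs(i-1)² − β θs(i-1) θs(i) + θs(i)² − γ*(θs(i-1) + θs(i))` is
independent of `i` for `0 ≤ i ≤ d+1`; indeed
`p i − p (i+1) = (θs(i-1) − θs(i+1)) (θs(i-1) − β θs(i) + θs(i+1) − γ*) = 0`
for `0 ≤ i ≤ d`. -/
theorem p_independent {F : Type*} [Field F] (d : ℕ) (β γs : F) (θs : ℤ → F)
    (hrec : ∀ i : ℤ, 0 ≤ i → i ≤ d → γs = θs (i - 1) - β * θs i + θs (i + 1)) :
    let p : ℤ → F := fun i =>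
      θs (i - 1) ^ 2 - β * θs (i - 1) * θs i + θs i ^ 2 - γs * (θs (i - 1) + θs i)
    (∀ i : ℤ, 0 ≤ i → i ≤ d →
      p i - p (i + 1) = (θs (i - 1) - θs (i + 1)) * (θs (i - 1) - β * θs i + θs (i + 1) - γs)
        ∧ p i - p (i + 1) = 0) ∧
    ∀ i j : ℤ, 0 ≤ i → i ≤ (d : ℤ) + 1 → 0 ≤ j → j ≤ (d : ℤ) + 1 → p i = p j :=
  p_independent_general 0 d β γs θs hrec
end

section
/- Let 𝔽 be a field, d ≥ 0 an integer, and V a (d+1)-dimensional vector space over 𝔽. Let {E*_i}_{i=0}^{d} be a system of mutually orthogonal idempotents in End(V), and let A ∈ End(V) satisfy E*_i A E*_j = 0 whenever |i−j| > 1 (0 ≤ i,j ≤ d). Let θ*_0,…,θ*_d ∈ 𝔽 and set A* = Σ_{i=0}^{d} θ*_i E*_i. Let β, γ* ∈ 𝔽 and let θ*_{−1}, θ*_{d+1} ∈ 𝔽 satisfy γ* = θ*_{i−1} − βθ*_i + θ*_{i+1} for 0 ≤ i ≤ d, and let δ* be the common value of θ*_{i−1}² − βθ*_{i−1}θ*_i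 + θ*_i² − γ*(θ*_{i−1} + θ*_i) (0 ≤ i ≤ d+1). Set a_i = tr(E*_iA) and suppose there exist γ, ω, η* ∈ 𝔽 such that a_i(θ*_i − θ*_{i−1})(θ*_i − θ*_{i+1}) = γθ*_i² + ωθ*_i + η* for 0 ≤ i ≤ d. Then A*²A − βA*AA* + AA*² − γ*(AA* + A*A) − δ*A = γA*² + ωA* + η*I. -/
/-!
Sandwich both sides between `E*_i` and `E*_j`, on which `A*` acts as the scalars `θ*_i` and `θ*_j`.
The left-hand side becomes `P(θ*_i, θ*_j) E*_i A E*_j`, where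
`P(x, y) = x² - βxy + y² - γ*(x + y) - δ*`, and the right-hand side becomes
`(γθ*_i² + ωθ*_i + η*) E*_i E*_j`. For `|i - j| > 1` both vanish because `A` is tridiagonal, for
`|i - j| = 1` because `P(θ*_i, θ*_j) = 0`. For `i = j` one has `E*_i A E*_i = a_i E*_i`, and the
recurrence makes `θ*_{i-1}` and `θ*_{i+1}` the two roots of `P(·, θ*_i)`, so that
`P(θ*_i, θ*_i) = (θ*_i - θ*_{i-1})(θ*_i - θ*_{i+1})`.
-/

namespace LeonardPaper

variable {F : Type*} [Field F] {V : Type*} [AddCommGroup V] [Module F V]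

section LinearAlgebra

theorem exists_eq_smulRight_of_finrank_range_eq_one {W : Type*} [AddCommGroup W] [Module F W]
    {f : V →ₗ[F] W} (hf : Module.finrank F (LinearMap.range f) = 1) :
    ∃ (φ : Module.Dual F V) (w : W), f = φ.smulRight w := by
  let b := Module.basisUnique Unit hf
  refine ⟨b.coord () ∘ₗ f.rangeRestrict, b (), LinearMap.ext fun x ↦ ?_⟩
  simpa using congrArg Subtype.val (b.sum_repr (f.rangeRestrict x)).symm

theorem mul_mul_self_eq_trace_smul [FiniteDimensional F V] {E : Module.End F V}
    (hE : Module.finrank F (LinearMap.range E) = 1) (A : Module.End F V) :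
    E * A * E = LinearMap.trace F V (E * A) • E := by
  obtain ⟨φ, v, rfl⟩ := exists_eq_smulRight_of_finrank_range_eq_one hE
  have hmul : φ.smulRight v * A = (φ ∘ₗ A).smulRight v := rfl
  ext x
  simp [hmul, LinearMap.trace_smulRight, smul_smul, mul_comm]

theorem completeOrthogonalIdempotents_of_sum_finrank_range {ι : Type*} [Fintype ι]
    [FiniteDimensional F V] {E : ι → Module.End F V} (hE : OrthogonalIdempotents E)
    (hdim : ∑ i, Module.finrank F (LinearMap.range (E i)) = Module.finrank F V) :
    CompleteOrthogonalIdempotents E := by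
  classical
  let π : V →ₗ[F] ∀ i, LinearMap.range (E i) := LinearMap.pi fun i ↦ (E i).rangeRestrict
  have hπ : ∀ x i, (π x i : V) = E i x := fun _ _ ↦ rfl
  have mul_apply : ∀ i j x, E i (E j x) = if i = j then E i x else 0 := fun i j x ↦ by
    rw [← Module.End.mul_apply, hE.mul_eq]
    split_ifs <;> rfl
  have surjective : Function.Surjective π := fun y ↦ by
    choose x hx using fun i ↦ (y i).2
    refine ⟨∑ j, E j (x j), funext fun i ↦ Subtype.ext ?_⟩
    simpa [hπ, mul_apply] using hx i
  have injective : Function.Injective π :=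
    (LinearMap.injective_iff_surjective_of_finrank_eq_finrank
      (by rw [Module.finrank_pi_fintype, hdim])).mpr surjective
  refine ⟨hE, LinearMap.ext fun x ↦ injective <| funext fun i ↦ Subtype.ext ?_⟩
  simp [hπ, mul_apply]

theorem MOISys.completeOrthogonalIdempotents {d : ℕ} {E : Fin (d + 1) → Module.End F V}
    (hE : MOISys d E) (hdim : Module.finrank F V = d + 1) : CompleteOrthogonalIdempotents E := by
  have := Module.finite_of_finrank_eq_succ hdim
  exact completeOrthogonalIdempotents_of_sum_finrank_range
    (OrthogonalIdempotents.iff_mul_eq.mpr hE.1) (by simp [hE.2, hdim])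

end LinearAlgebra

section Idempotents

variable {ι R : Type*} [Fintype ι]

theorem ext_of_mul_mul_idempotents [Semiring R] {e : ι → R} (he : CompleteOrthogonalIdempotents e)
    {x y : R} (h : ∀ i j, e i * x * e j = e i * y * e j) : x = y := by
  have sum_mul_mul (z : R) : ∑ i, ∑ j, e i * z * e j = z := by
    simp_rw [← Finset.mul_sum, he.complete, mul_one, ← Finset.sum_mul, he.complete, one_mul]
  rw [← sum_mul_mul x, ← sum_mul_mul y]
  simp_rw [h]

variable {K : Type*} [CommSemiring K] [Semiring R] [Algebra K R] {e : ι → R}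

theorem idempotent_mul_sum_smul (he : OrthogonalIdempotents e) (θ : ι → K) (i : ι) :
    e i * ∑ k, θ k • e k = θ i • e i := by
  classical simp [Finset.mul_sum, he.mul_eq]

theorem sum_smul_mul_idempotent (he : OrthogonalIdempotents e) (θ : ι → K) (i : ι) :
    (∑ k, θ k • e k) * e i = θ i • e i := by
  classical simp [Finset.sum_mul, he.mul_eq]

end Idempotents

section AskeyWilson

theorem mul_quadratic_mul {K R : Type*} [CommSemiring K] [Semiring R] [Algebra K R]
    {p q S : R} {x : K} (hp : p * S = x • p) (γ ω η : K) :
    p * (γ • S ^ 2 + ω • S + η • 1) * q = (γ * x ^ 2 + ω * x + η) • (p * q) := by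
  simp only [pow_two, mul_add, add_mul, mul_smul_comm, smul_mul_assoc, ← mul_assoc, hp, mul_one]
  module

variable {K : Type*} [CommRing K]

/-- The symmetric polynomial `P(x, y) = x² - βxy + y² - γ(x + y) - δ` attached to the
Askey–Wilson relation with parameters `β`, `γ`, `δ`; with `γ = γ*`, `δ = δ*`, consecutive `θ*_i`
are its zeros. -/
def askeyWilsonPoly (β γ δ x y : K) : K :=
  x ^ 2 - β * x * y + y ^ 2 - γ * (x + y) - δ

theorem askeyWilsonPoly_comm (β γ δ x y : K) :
    askeyWilsonPoly β γ δ x y = askeyWilsonPoly β γ δ y x := by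
  unfold askeyWilsonPoly
  ring

theorem askeyWilsonPoly_self {β γ δ x y z : K} (hrec : γ = x - β * y + z)
    (hxy : askeyWilsonPoly β γ δ x y = 0) :
    askeyWilsonPoly β γ δ y y = (y - x) * (y - z) := by
  unfold askeyWilsonPoly at *
  linear_combination hxy + (x - y) * hrec

variable {R : Type*} [Ring R] [Algebra K R] {p q S : R} {x y : K}

theorem mul_askeyWilson_mul (hp : p * S = x • p) (hq : S * q = y • q) (β γ δ : K) (A : R) :
    p * (S ^ 2 * A - β • (S * A * S) + A * S ^ 2 - γ • (A * S + S * A) - δ • A) * q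
      = askeyWilsonPoly β γ δ x y • (p * A * q) := by
  have hp' (T : R) : p * (S * T) = x • (p * T) := by rw [← mul_assoc, hp, smul_mul_assoc]
  simp only [pow_two, mul_sub, mul_add, sub_mul, add_mul, mul_smul_comm, smul_mul_assoc,
    mul_assoc, hp', hq, askeyWilsonPoly]
  module

theorem AW2_identity_general {d : ℕ} {e : Fin (d + 1) → R} (he : CompleteOrthogonalIdempotents e)
    {A : R}
    (hAfar : ∀ i j : Fin (d + 1), ((i : ℕ) + 1 < (j : ℕ) ∨ (j : ℕ) + 1 < (i : ℕ)) →
      e i * A * e j = 0)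
    {θ : ℤ → K} {S : R} (hS : S = ∑ i : Fin (d + 1), θ ((i : ℕ) : ℤ) • e i)
    {β γs δs : K}
    (hrec : ∀ i : ℤ, 0 ≤ i → i ≤ d → γs = θ (i - 1) - β * θ i + θ (i + 1))
    (hδ : ∀ i : ℤ, 0 ≤ i → i ≤ d →
      θ (i - 1) ^ 2 - β * θ (i - 1) * θ i + θ i ^ 2 - γs * (θ (i - 1) + θ i) = δs)
    {a : ℕ → K} (hdiag : ∀ i : Fin (d + 1), e i * A * e i = a i • e i)
    {γ ω η : K}
    (ha : ∀ i : ℕ, i ≤ d →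
      a i * ((θ i - θ ((i : ℤ) - 1)) * (θ i - θ ((i : ℤ) + 1))) = γ * θ i ^ 2 + ω * θ i + η) :
    S ^ 2 * A - β • (S * A * S) + A * S ^ 2 - γs • (A * S + S * A) - δs • A
      = γ • S ^ 2 + ω • S + η • (1 : R) := by
  have mul_S (i) : e i * S = θ i • e i :=
    hS ▸ idempotent_mul_sum_smul he.toOrthogonalIdempotents (fun i : Fin (d + 1) ↦ θ i) i
  have S_mul (i) : S * e i = θ i • e i :=
    hS ▸ sum_smul_mul_idempotent he.toOrthogonalIdempotents (fun i : Fin (d + 1) ↦ θ i) i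
  have consecutive (i : Fin (d + 1)) : askeyWilsonPoly β γs δs (θ ((i : ℤ) - 1)) (θ i) = 0 :=
    sub_eq_zero.mpr (hδ i i.val.cast_nonneg (mod_cast i.is_le))
  refine ext_of_mul_mul_idempotents he fun i j ↦ ?_
  rw [mul_askeyWilson_mul (mul_S i) (S_mul j), mul_quadratic_mul (mul_S i)]
  obtain rfl | hij := eq_or_ne i j
  · rw [hdiag, (he.idem i).eq, smul_smul, ← ha i i.is_le, mul_comm (a i),
      askeyWilsonPoly_self (hrec i i.val.cast_nonneg (mod_cast i.is_le)) (consecutive i)]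
  rw [he.ortho hij, smul_zero]
  by_cases hfar : (i : ℕ) + 1 < j ∨ (j : ℕ) + 1 < i
  · rw [hAfar i j hfar, smul_zero]
  suffices askeyWilsonPoly β γs δs (θ i) (θ j) = 0 by rw [this, zero_smul]
  obtain hj | hi : (i : ℤ) = j - 1 ∨ (j : ℤ) = i - 1 := by lia
  · rw [hj, consecutive j]
  · rw [hi, askeyWilsonPoly_comm, consecutive i]

end AskeyWilson

/-- The operator identity (eq. (3.12), "AW2") from the proof of the first main theorem:
`A*²A − βA*AA* + AA*² − γ*(AA* + A*A) − δ*A = γA*² + ωA* + η*I`. -/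
theorem AW2_identity
    (d : ℕ) (hdim : Module.finrank F V = d + 1)
    (Es : Fin (d + 1) → Module.End F V) (hEs : MOISys d Es)
    (A : Module.End F V)
    (hAfar : ∀ i j : Fin (d + 1), ((i : ℕ) + 1 < (j : ℕ) ∨ (j : ℕ) + 1 < (i : ℕ)) →
      Es i * A * Es j = 0)
    (θs : ℤ → F) (As : Module.End F V)
    (hAs : As = ∑ i : Fin (d + 1), θs ((i : ℕ) : ℤ) • Es i)
    (β γs δs : F)
    (hrec : ∀ i : ℤ, 0 ≤ i → i ≤ d → γs = θs (i - 1) - β * θs i + θs (i + 1))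
    (hδ : ∀ i : ℤ, 0 ≤ i → i ≤ (d : ℤ) + 1 →
      θs (i - 1) ^ 2 - β * θs (i - 1) * θs i + θs i ^ 2 - γs * (θs (i - 1) + θs i) = δs)
    (a : ℕ → F)
    (htr : ∀ i : Fin (d + 1), a i = LinearMap.trace F V (Es i * A))
    (γ ω ηs : F)
    (hai : ∀ i : ℕ, i ≤ d →
      a i * ((θs i - θs ((i : ℤ) - 1)) * (θs i - θs ((i : ℤ) + 1)))
        = γ * θs i ^ 2 + ω * θs i + ηs) :
    As ^ 2 * A - β • (As * A * As) + A * As ^ 2 - γs • (A * As + As * A) - δs • A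
      = γ • As ^ 2 + ω • As + ηs • (1 : Module.End F V) := by
  have := Module.finite_of_finrank_eq_succ hdim
  exact AW2_identity_general (hEs.completeOrthogonalIdempotents hdim) hAfar hAs hrec
    (fun i h₀ hd ↦ hδ i h₀ (by lia))
    (fun i ↦ htr i ▸ mul_mul_self_eq_trace_smul (hEs.2 i) A) hai

end LeonardPaper
end

section
/- Let 𝔽 be a field and d ≥ 1 an integer. Let θ_{−1}, θ_0, θ_1 ∈ 𝔽, β, γ* ∈ 𝔽, and let θ*_{−1}, θ*_0, …, θ*_{d+1} ∈ 𝔽 satisfy γ* = θ*_{i−1} − βθ*_i + θ*_{i+1} for 0 ≤ i ≤ d. Let {a_i}_{i=0}^{d}, {b_i}_{i=0}^{d−1}, {c_i}_{i=1}^{d} be scalars in 𝔽 with b_d = c_0 = 0, and let a*_0, Ω ∈ 𝔽 be such that: c_i + a_i + b_i = θ_0 for 0 ≤ i ≤ d; c_i(θ*_{i−1} − θ*_i) − b_i(θ*_i − θ*_{i+1}) = (θ_1 − θ_0)(θ*_i − a*_0) for 0 ≤ i ≤ d; and c_i(θ*_{i−1} − θ*_{i+1}) − b_{i−1}(θ*_{i−2}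 − θ*_i) − (θ_0 − θ_{−1})(θ*_{i−1} + θ*_i) = Ω for 1 ≤ i ≤ d. Define γ = θ_{−1} − βθ_0 + θ_1 and ω = 2θ_0(a*_0 − γ*) − 2θ_1a*_0 − Ω. Then a_i(θ*_i − θ*_{i+1}) + a_{i−1}(θ*_{i−1} − θ*_{i−2}) − γ(θ*_{i−1} + θ*_i) = ω for 1 ≤ i ≤ d, and consequently the scalar a_i(θ*_i − θ*_{i−1})(θ*_i − θ*_{i+1}) − γθ*_i² − ωθ*_i is independent of i for 0 ≤ i ≤ d; that is, there exists η* ∈ 𝔽 such that a_i(θ*_i − θ*_{i−1})(θ*_i − θ*_{i+1}) = γθ*_i² + ωθ*_i + η* for 0 ≤ i ≤ d. -/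
/-!
Eliminating `b_i`, respectively `c_i`, between `c_i + a_i + b_i = θ_0` and
`c_i(θ*_{i-1} − θ*_i) − b_i(θ*_i − θ*_{i+1}) = (θ_1 − θ_0)(θ*_i − a*_0)` gives two mirror-image
relations. Add the first at `i` to the second at `i − 1`: the remaining terms in `c_i` and
`b_{i-1}` are those in the definition of `Ω`, and the recurrence expresses
`θ*_{i-2} + θ*_{i+1}` through `θ*_{i-1} + θ*_i`. This is the identity with value `ω`; multiplied
by `θ*_i − θ*_{i-1}` it telescopes.
-/

section LocalIdentities

variable {R : Type*} [CommRing R]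

theorem mul_sub_add_mul_sub_eq_of_balance {θ0 θ1 α a b c x y z : R} (hsum : c + a + b = θ0)
    (hbal : c * (x - y) - b * (y - z) = (θ1 - θ0) * (y - α)) :
    a * (y - z) + c * (x - z) = θ1 * y - θ0 * z - (θ1 - θ0) * α := by
  linear_combination hbal + (y - z) * hsum

theorem outer_add_eq_of_recurrence {β γs w x y z : R} (hx : γs = w - β * x + y)
    (hy : γs = x - β * y + z) : w + z = 2 * γs + (β - 1) * (x + y) := by
  linear_combination -hx - hy

theorem mul_sub_add_mul_sub_sub_mul_add_eq_of_balance
    {θm1 θ0 θ1 β γs α Ω w x y z a₁ b₁ c₁ a₂ b₂ c₂ : R}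
    (hrec₁ : γs = w - β * x + y) (hrec₂ : γs = x - β * y + z)
    (hsum₁ : c₁ + a₁ + b₁ = θ0) (hsum₂ : c₂ + a₂ + b₂ = θ0)
    (hbal₁ : c₁ * (w - x) - b₁ * (x - y) = (θ1 - θ0) * (x - α))
    (hbal₂ : c₂ * (x - y) - b₂ * (y - z) = (θ1 - θ0) * (y - α))
    (hΩ : c₂ * (x - z) - b₁ * (w - y) - (θ0 - θm1) * (x + y) = Ω) :
    a₂ * (y - z) + a₁ * (x - w) - (θm1 - β * θ0 + θ1) * (x + y)
      = 2 * θ0 * (α - γs) - 2 * θ1 * α - Ω := by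
  have hright : a₂ * (y - z) + c₂ * (x - z) = θ1 * y - θ0 * z - (θ1 - θ0) * α :=
    mul_sub_add_mul_sub_eq_of_balance hsum₂ hbal₂
  -- The same relation read from right to left, which exchanges `b₁` and `c₁`.
  have hleft : a₁ * (x - w) + b₁ * (y - w) = θ1 * x - θ0 * w - (θ1 - θ0) * α :=
    mul_sub_add_mul_sub_eq_of_balance (c := b₁) (b := c₁)
      (by linear_combination hsum₁) (by linear_combination hbal₁)
  have houter : w + z = 2 * γs + (β - 1) * (x + y) :=
    outer_add_eq_of_recurrence hrec₁ hrec₂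
  linear_combination hright + hleft - hΩ - θ0 * houter

end LocalIdentities

theorem eq_apply_zero_of_eq_apply_pred {X : Type*} {f : ℕ → X} {d : ℕ}
    (h : ∀ i, 1 ≤ i → i ≤ d → f i = f (i - 1)) {i : ℕ} (hi : i ≤ d) : f i = f 0 := by
  induction i with
  | zero => rfl
  | succ j ih => exact (h (j + 1) (by lia) hi).trans (ih (by lia))

section QuadraticResidual

variable {R : Type*} [CommRing R]

/-- The scalar `a_i(θ*_i − θ*_{i-1})(θ*_i − θ*_{i+1}) − γθ*_i² − ωθ*_i`, whose constant value is
`η*`. The sequence `θs` is indexed by `ℤ` because `θ*_{-1}` occurs at `i = 0`. -/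
def quadraticResidual (θs : ℤ → R) (a : ℕ → R) (γ ω : R) (i : ℕ) : R :=
  a i * ((θs i - θs ((i : ℤ) - 1)) * (θs i - θs ((i : ℤ) + 1))) - γ * θs i ^ 2 - ω * θs i

theorem quadraticResidual_eq_pred {θs : ℤ → R} {a : ℕ → R} {γ ω : R} {i : ℕ} (hi : 1 ≤ i)
    (h : a i * (θs i - θs ((i : ℤ) + 1)) + a (i - 1) * (θs ((i : ℤ) - 1) - θs ((i : ℤ) - 2))
      - γ * (θs ((i : ℤ) - 1) + θs i) = ω) :
    quadraticResidual θs a γ ω i = quadraticResidual θs a γ ω (i - 1) := by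
  simp only [quadraticResidual, Nat.cast_pred hi, sub_add_cancel, sub_sub _ (1 : ℤ) 1,
    one_add_one_eq_two]
  linear_combination (θs i - θs ((i : ℤ) - 1)) * h

end QuadraticResidual

theorem condition_v_verification_general {R : Type*} [CommRing R] (d : ℕ)
    (θm1 θ0 θ1 β γs : R) (θs : ℤ → R)
    (hrec : ∀ i : ℤ, 0 ≤ i → i ≤ d → γs = θs (i - 1) - β * θs i + θs (i + 1))
    (a b c : ℕ → R) (astar0 Ω : R)
    (hsum : ∀ i : ℕ, i ≤ d → c i + a i + b i = θ0)
    (hbici : ∀ i : ℕ, i ≤ d →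
      c i * (θs ((i : ℤ) - 1) - θs i) - b i * (θs i - θs ((i : ℤ) + 1))
        = (θ1 - θ0) * (θs i - astar0))
    (hΩ : ∀ i : ℕ, 1 ≤ i → i ≤ d →
      c i * (θs ((i : ℤ) - 1) - θs ((i : ℤ) + 1)) - b (i - 1) * (θs ((i : ℤ) - 2) - θs i)
        - (θ0 - θm1) * (θs ((i : ℤ) - 1) + θs i) = Ω) :
    let γ : R := θm1 - β * θ0 + θ1
    let ω : R := 2 * θ0 * (astar0 - γs) - 2 * θ1 * astar0 - Ω
    (∀ i : ℕ, 1 ≤ i → i ≤ d →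
      a i * (θs i - θs ((i : ℤ) + 1)) + a (i - 1) * (θs ((i : ℤ) - 1) - θs ((i : ℤ) - 2))
        - γ * (θs ((i : ℤ) - 1) + θs i) = ω) ∧
    ∃ ηs : R, ∀ i : ℕ, i ≤ d →
      a i * ((θs i - θs ((i : ℤ) - 1)) * (θs i - θs ((i : ℤ) + 1)))
        = γ * θs i ^ 2 + ω * θs i + ηs := by
  intro γ ω
  have hconsecutive : ∀ i : ℕ, 1 ≤ i → i ≤ d →
      a i * (θs i - θs ((i : ℤ) + 1)) + a (i - 1) * (θs ((i : ℤ) - 1) - θs ((i : ℤ) - 2))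
        - γ * (θs ((i : ℤ) - 1) + θs i) = ω := by
    intro i hi hid
    have hrec_pred := hrec (i - 1) (by lia) (by lia)
    have hbici_pred := hbici (i - 1) (by lia)
    simp only [Nat.cast_pred hi, sub_add_cancel, sub_sub _ (1 : ℤ) 1, one_add_one_eq_two]
      at hrec_pred hbici_pred
    exact mul_sub_add_mul_sub_sub_mul_add_eq_of_balance hrec_pred (hrec i (by lia) (by lia))
      (hsum (i - 1) (by lia)) (hsum i hid) hbici_pred (hbici i hid) (hΩ i hi hid)
  refine ⟨hconsecutive, quadraticResidual θs a γ ω 0, fun i hid => ?_⟩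
  have hconst : quadraticResidual θs a γ ω i = quadraticResidual θs a γ ω 0 :=
    eq_apply_zero_of_eq_apply_pred
      (fun j hj hjd => quadraticResidual_eq_pred hj (hconsecutive j hj hjd)) hid
  rw [← hconst, quadraticResidual]
  ring

/-- The chain of identities from the proof of the second main theorem verifying
condition (v) of the first main theorem: with `γ = θ_{-1} − βθ_0 + θ_1` and
`ω = 2θ_0(a*_0 − γ*) − 2θ_1 a*_0 − Ω`, one has
`a_i(θ*_i − θ*_{i+1}) + a_{i-1}(θ*_{i-1} − θ*_{i-2}) − γ(θ*_{i-1} + θ*_i) = ω`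
for `1 ≤ i ≤ d`, and consequently there exists `η*` with
`a_i(θ*_i − θ*_{i-1})(θ*_i − θ*_{i+1}) = γθ*_i² + ωθ*_i + η*` for `0 ≤ i ≤ d`. -/
theorem condition_v_verification {F : Type*} [Field F]
    (d : ℕ) (hd : 1 ≤ d)
    (θm1 θ0 θ1 β γs : F) (θs : ℤ → F)
    (hrec : ∀ i : ℤ, 0 ≤ i → i ≤ d → γs = θs (i - 1) - β * θs i + θs (i + 1))
    (a b c : ℕ → F) (hbd : b d = 0) (hc0 : c 0 = 0)
    (astar0 Ω : F)
    (hsum : ∀ i : ℕ, i ≤ d → c i + a i + b i = θ0)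
    (hbici : ∀ i : ℕ, i ≤ d →
      c i * (θs ((i : ℤ) - 1) - θs i) - b i * (θs i - θs ((i : ℤ) + 1))
        = (θ1 - θ0) * (θs i - astar0))
    (hΩ : ∀ i : ℕ, 1 ≤ i → i ≤ d →
      c i * (θs ((i : ℤ) - 1) - θs ((i : ℤ) + 1)) - b (i - 1) * (θs ((i : ℤ) - 2) - θs i)
        - (θ0 - θm1) * (θs ((i : ℤ) - 1) + θs i) = Ω) :
    let γ : F := θm1 - β * θ0 + θ1
    let ω : F := 2 * θ0 * (astar0 - γs) - 2 * θ1 * astar0 - Ω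
    (∀ i : ℕ, 1 ≤ i → i ≤ d →
      a i * (θs i - θs ((i : ℤ) + 1)) + a (i - 1) * (θs ((i : ℤ) - 1) - θs ((i : ℤ) - 2))
        - γ * (θs ((i : ℤ) - 1) + θs i) = ω) ∧
    ∃ ηs : F, ∀ i : ℕ, i ≤ d →
      a i * ((θs i - θs ((i : ℤ) - 1)) * (θs i - θs ((i : ℤ) + 1)))
        = γ * θs i ^ 2 + ω * θs i + ηs :=
  condition_v_verification_general d θm1 θ0 θ1 β γs θs hrec a b c astar0 Ω hsum hbici hΩ
end
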